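/- Let E = E(d,M,p) be a fractal percolation in ℝ^d with integer scale M ≥ 2 and probability p > M^{-d+1/2}. Then, almost surely conditioned on E ≠ ∅, the distance set D(E) := { |x − y| : x, y ∈ E } contains a nonempty open interval. -/

import Mathlib

open MeasureTheory Set ENNReal ProbabilityTheory Real

noncomputable section

/-- The alphabet indexing the `M^d` subcubes of a cube in `[0,1]^d`. -/
abbrev Alpha (d M : ℕ) : Type := Fin d → Fin M

/-- Finite nonempty words over the alphabet; they index `M`-adic cubes. -/
abbrev Word (d M : ℕ) : Type := {w : List (Alpha d M) // w ≠ []}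

/-- The sample space: `{0,1}`-labelings of all finite nonempty words. -/
abbrev PercSpace (d M : ℕ) : Type := Word d M → Bool

/-- `P` is the product measure making the labels i.i.d. Bernoulli(`p`). -/
def IsBernoulliPerc (d M : ℕ) (p : ℝ) (P : Measure (PercSpace d M)) : Prop :=
  IsProbabilityMeasure P ∧
    ∀ (S : Finset (Word d M)) (b : Word d M → Bool),
      P {ω | ∀ w ∈ S, ω w = b w} =
        ∏ w ∈ S, if b w then ENNReal.ofReal p else ENNReal.ofReal (1 - p)

/-- A level-`w.length` cube is retained iff its word and every nonempty prefix
of its word carry label 1. -/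
def Retained (d M : ℕ) (ω : PercSpace d M) (w : List (Alpha d M)) : Prop :=
  ∀ (u : List (Alpha d M)) (hu : u ≠ []), u <+: w → ω ⟨u, hu⟩ = true

/-- The `i`-th coordinate of the lower-left corner of the cube indexed by `w`. -/
def wordBase (d M : ℕ) (w : List (Alpha d M)) (i : Fin d) : ℝ :=
  ∑ j : Fin w.length, ((w.get j) i : ℝ) * (M : ℝ) ^ (-(j : ℤ) - 1)

/-- The closed `M`-adic cube of level `w.length` indexed by the word `w`. -/
def wordCube (d M : ℕ) (w : List (Alpha d M)) : Set (EuclideanSpace ℝ (Fin d)) :=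
  {x | ∀ i, wordBase d M w i ≤ x i ∧ x i ≤ wordBase d M w i + (M : ℝ) ^ (-(w.length : ℤ))}

/-- `E_n`, the union of the retained level-`n` cubes. -/
def approx (d M : ℕ) (ω : PercSpace d M) (n : ℕ) : Set (EuclideanSpace ℝ (Fin d)) :=
  ⋃ w ∈ {w : List (Alpha d M) | w.length = n ∧ Retained d M ω w}, wordCube d M w

/-- The fractal percolation set `E = ⋂_{n ≥ 1} E_n`. -/
def percLimit (d M : ℕ) (ω : PercSpace d M) : Set (EuclideanSpace ℝ (Fin d)) :=
  ⋂ n ∈ {n : ℕ | 1 ≤ n}, approx d M ω n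

/-!
Write `d = e + 1`. For `t ∈ [0,1]` choose at random a pair of points of the unit cube at distance
`targetDist t`, one in a left part and one in a right part of the cube, and let `σ_t w w'` be the
probability that they lie in the cells of the words `w` and `w'` of length `n`. Then
`σ_t w w' ≲ M^{-(2d-1)n}`, since the pair has `2d - 1` free coordinates, and a cell is linked
(`σ_t > 0`) to at most `≲ M^{(d-1)n}` others. The mass of the links between retained cells, each
cell weighted by `p⁻ⁿ`, has mean one. When only the left cells are refined, its increment is a sum
of independent centred terms, because the right cells involve other labels; then the right cells
are refined in the same way. The weighted number of retained cells linked to a given cell is up to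
small factors at most `max (M^{d-1}) p⁻¹ ^ n`, so `M^{-(2d-1)} < p²` and `M^{-d} < p` make the terms
so small that, by Hoeffding's inequality, increments larger than `2θⁿ`, for some `θ < 1`, have
super-exponentially small probability. This beats a union bound over an exponentially fine net
of `t`, and `σ_t` is Lipschitz in `t`; so with positive probability there are links at every level
simultaneously for all `t`, and compactness turns them into realised distances.

To pass from positive probability to almost sure on survival, let `f x = 1 - p + p x^N` with
`N = M^d`. The probability `x` of extinction satisfies `f x ≤ x`, and the probability `y < 1` that
no retained cube carries a copy of the favourable event satisfies `y ≤ f y`. By strict convexity and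
`f 1 = 1` this forces `y ≤ x`, so the two events agree up to a null set.
-/

namespace FractalPercolation

/-! ### Bernoulli fields -/

section Resampling

variable {ι : Type*} {X : ι → Type*} [∀ i, MeasurableSpace (X i)] (μ : ∀ i, Measure (X i))
  [∀ i, IsProbabilityMeasure (μ i)] (T : Set ι) [DecidablePred (· ∈ T)]

theorem measurePreserving_piecewise_infinitePi :
    MeasurePreserving (fun z : (∀ i, X i) × (∀ i, X i) => T.piecewise z.2 z.1)
      ((Measure.infinitePi μ).prod (Measure.infinitePi μ)) (Measure.infinitePi μ) := by
  have hmeas : Measurable fun z : (∀ i, X i) × (∀ i, X i) => T.piecewise z.2 z.1 := by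
    refine measurable_pi_lambda _ fun i => ?_
    by_cases hi : i ∈ T
    · simpa only [piecewise_eq_of_mem _ _ _ hi] using by fun_prop
    · simpa only [piecewise_eq_of_notMem _ _ _ hi] using by fun_prop
  refine ⟨hmeas, Measure.eq_infinitePi μ fun s t ht => ?_⟩
  have hbox : (fun z : (∀ i, X i) × (∀ i, X i) => T.piecewise z.2 z.1) ⁻¹' (s : Set ι).pi t =
      Set.pi (s.filter (· ∉ T)) t ×ˢ Set.pi (s.filter (· ∈ T)) t := by
    ext z
    simp only [mem_preimage, mem_pi, mem_prod, Finset.coe_filter, Set.mem_ofPred_eq]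
    refine ⟨fun h => ⟨fun i hi => ?_, fun i hi => ?_⟩, fun h i hi => ?_⟩
    · simpa [hi.2] using h i hi.1
    · simpa [hi.2] using h i hi.1
    · by_cases hT : i ∈ T
      · simpa [hT] using h.2 i ⟨hi, hT⟩
      · simpa [hT] using h.1 i ⟨hi, hT⟩
  rw [Measure.map_apply hmeas (.pi s.countable_toSet fun i _ => ht i), hbox, Measure.prod_prod,
    Measure.infinitePi_pi μ fun i _ => ht i, Measure.infinitePi_pi μ fun i _ => ht i, mul_comm,
    Finset.prod_filter_mul_prod_filter_not]

theorem infinitePi_le_of_forall_piecewise {E : Set (∀ i, X i)} (hE : MeasurableSet E) {b : ℝ≥0∞}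
    (h : ∀ ω, Measure.infinitePi μ {η | T.piecewise η ω ∈ E} ≤ b) :
    Measure.infinitePi μ E ≤ b := by
  have hmp := measurePreserving_piecewise_infinitePi μ T
  rw [← hmp.measure_preimage hE.nullMeasurableSet, Measure.prod_apply (hmp.measurable hE)]
  exact (lintegral_mono h).trans (by simp)

end Resampling

/-- The law of independent Bernoulli(`p`) labels on an index set `W`. -/
def bernoulliField (W : Type*) (p : unitInterval) : Measure (W → Bool) :=
  Measure.infinitePi fun _ => bernoulliMeasure true false p

/-- The normalized label: it has mean one under the Bernoulli(`p`) law. -/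
def labelWeight (p : ℝ) (b : Bool) : ℝ := if b then p⁻¹ else 0

section Field

variable {W : Type*} {p : unitInterval}

instance : IsProbabilityMeasure (bernoulliField W p) := by
  unfold bernoulliField; infer_instance

theorem bernoulliField_forall_mem_eq_true (T : Finset W) :
    bernoulliField W p {ω | ∀ w ∈ T, ω w = true} = ENNReal.ofReal p ^ T.card := by
  have hbox : {ω : W → Bool | ∀ w ∈ T, ω w = true} = Set.pi T fun _ => {true} := by
    ext; simp
  have hp : (unitInterval.toNNReal p : ℝ≥0∞) = ENNReal.ofReal p := by
    rw [ENNReal.ofReal, Real.toNNReal_of_nonneg p.2.1]; rfl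
  rw [hbox, bernoulliField, Measure.infinitePi_pi _ fun _ _ => .singleton _]
  simp [hp]

theorem bernoulliField_inter_forall_mem_eq_true {G : Set (W → Bool)} (hG : MeasurableSet G)
    {T : Finset W} (hGT : DependsOn (· ∈ G) (T : Set W)ᶜ) :
    bernoulliField W p (G ∩ {ω | ∀ w ∈ T, ω w = true}) =
      bernoulliField W p G * ENNReal.ofReal p ^ T.card := by
  classical
  have hmp := measurePreserving_piecewise_infinitePi
    (fun _ : W => bernoulliMeasure true false p) (T : Set W)
  have hT : MeasurableSet {ω : W → Bool | ∀ w ∈ T, ω w = true} :=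
    .pi (t := fun _ => {true}) T.countable_toSet fun _ _ => .singleton _
  have hpre : (fun z : (W → Bool) × (W → Bool) => (T : Set W).piecewise z.2 z.1) ⁻¹'
      (G ∩ {ω | ∀ w ∈ T, ω w = true}) = G ×ˢ {ω | ∀ w ∈ T, ω w = true} := by
    ext z
    have hz : (T : Set W).piecewise z.2 z.1 ∈ G ↔ z.1 ∈ G := iff_of_eq <| hGT fun w hw =>
      piecewise_eq_of_notMem _ _ _ hw
    simp +contextual [hz]
  rw [← bernoulliField_forall_mem_eq_true T, bernoulliField,
    ← hmp.measure_preimage (hG.inter hT).nullMeasurableSet, hpre, Measure.prod_prod]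

theorem map_bernoulliField_of_injective {V : Type*} {f : V → W} (hf : f.Injective) :
    (bernoulliField W p).map (fun ω v => ω (f v)) = bernoulliField V p :=
  Measure.map_infinitePi_infinitePi_of_inj hf

theorem labelWeight_nonneg (p : unitInterval) (b : Bool) : 0 ≤ labelWeight p b := by
  unfold labelWeight; split_ifs <;> [exact inv_nonneg.2 p.2.1; rfl]

theorem labelWeight_le_inv (p : unitInterval) (b : Bool) : labelWeight p b ≤ (p : ℝ)⁻¹ := by
  unfold labelWeight; split_ifs <;> [rfl; exact inv_nonneg.2 p.2.1]

theorem hasSubgaussianMGF_labelWeight_sub_one (hp : (0 : ℝ) < p) (w : W) :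
    HasSubgaussianMGF (fun ω : W → Bool => labelWeight p (ω w) - 1)
      ((‖(p : ℝ)⁻¹‖₊ / 2) ^ 2) (bernoulliField W p) := by
  have hlaw : (bernoulliField W p).map (fun ω => ω w) = bernoulliMeasure true false p :=
    Measure.infinitePi_map_eval _ w
  have hbd (b : Bool) : labelWeight p b - 1 ∈ Icc (-1) ((p : ℝ)⁻¹ - 1) :=
    ⟨by linarith [labelWeight_nonneg p b], by linarith [labelWeight_le_inv p b]⟩
  have hmean : ∫ b, (labelWeight p b - 1) ∂bernoulliMeasure true false p = 0 := by
    rw [integral_bernoulliMeasure]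
    simp only [labelWeight, smul_eq_mul, if_true, Bool.false_eq_true, if_false]
    field_simp
    ring
  have h := hasSubgaussianMGF_of_mem_Icc_of_integral_eq_zero
    (measurable_of_countable _).aemeasurable (ae_of_all _ hbd) hmean
  rw [← hlaw, sub_neg_eq_add, sub_add_cancel] at h
  exact HasSubgaussianMGF.of_map (Y := fun ω : W → Bool => ω w)
    (measurable_pi_apply w).aemeasurable h

theorem bernoulliField_sum_ge_le (hp : (0 : ℝ) < p) (T : Finset W) {c : W → ℝ} {δ D ε : ℝ}
    (hδ : 0 < δ) (hD : 0 < D) (hcδ : ∀ u ∈ T, |c u| ≤ δ) (hcD : ∑ u ∈ T, |c u| ≤ D)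
    (hε : 0 ≤ ε) :
    (bernoulliField W p).real {ω | ε ≤ ∑ u ∈ T, c u * (labelWeight p (ω u) - 1)} ≤
      exp (-(2 * p ^ 2 * ε ^ 2 / (δ * D))) := by
  have hindep : iIndepFun (fun u (ω : W → Bool) => c u * (labelWeight p (ω u) - 1))
      (bernoulliField W p) :=
    iIndepFun_infinitePi (X := fun u b => c u * (labelWeight p b - 1))
      fun _ => measurable_of_countable _
  have hsum := HasSubgaussianMGF.sum_of_iIndepFun hindep (s := T)
    fun u _ => (hasSubgaussianMGF_labelWeight_sub_one hp u).const_mul (c u)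
  have hvar : ∑ u ∈ T, c u ^ 2 ≤ δ * D := calc
    ∑ u ∈ T, c u ^ 2 ≤ ∑ u ∈ T, δ * |c u| := Finset.sum_le_sum fun u hu => by
      rw [← sq_abs, sq]; exact mul_le_mul_of_nonneg_right (hcδ u hu) (abs_nonneg _)
    _ = δ * ∑ u ∈ T, |c u| := (Finset.mul_sum ..).symm
    _ ≤ δ * D := by gcongr
  have hweak : HasSubgaussianMGF (fun ω => ∑ u ∈ T, c u * (labelWeight p (ω u) - 1))
      (Real.toNNReal (δ * D / (4 * p ^ 2))) (bernoulliField W p) := by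
    refine ⟨hsum.integrable_exp_mul, fun t => (hsum.mgf_le t).trans (exp_le_exp.2 ?_)⟩
    rw [Real.coe_toNNReal _ (by positivity)]
    gcongr
    push_cast
    calc _ = (∑ u ∈ T, c u ^ 2) * (1 / (4 * (p : ℝ) ^ 2)) := by
          rw [Finset.sum_mul]
          refine Finset.sum_congr rfl fun u _ => ?_
          change c u ^ 2 * (‖(p : ℝ)⁻¹‖ / 2) ^ 2 = _
          rw [Real.norm_of_nonneg (by positivity)]
          field_simp
          norm_num
      _ ≤ δ * D * (1 / (4 * (p : ℝ) ^ 2)) := by gcongr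
      _ = _ := by ring
  refine (hweak.measure_ge_le hε).trans_eq ?_
  rw [Real.coe_toNNReal _ (by positivity)]
  congr 1
  field_simp
  norm_num

theorem bernoulliField_abs_sum_ge_le (hp : (0 : ℝ) < p) (T : Finset W) {c : W → ℝ} {δ D ε : ℝ}
    (hδ : 0 < δ) (hD : 0 < D) (hcδ : ∀ u ∈ T, |c u| ≤ δ) (hcD : ∑ u ∈ T, |c u| ≤ D)
    (hε : 0 ≤ ε) :
    bernoulliField W p {ω | ε ≤ |∑ u ∈ T, c u * (labelWeight p (ω u) - 1)|} ≤
      ENNReal.ofReal (2 * exp (-(2 * p ^ 2 * ε ^ 2 / (δ * D)))) := by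
  have hpos := bernoulliField_sum_ge_le hp T hδ hD hcδ hcD hε
  have hneg := bernoulliField_sum_ge_le hp T (c := -c) hδ hD
    (by simpa using hcδ) (by simpa using hcD) hε
  have hsub : {ω : W → Bool | ε ≤ |∑ u ∈ T, c u * (labelWeight p (ω u) - 1)|} ⊆
      {ω | ε ≤ ∑ u ∈ T, c u * (labelWeight p (ω u) - 1)} ∪
        {ω | ε ≤ ∑ u ∈ T, (-c) u * (labelWeight p (ω u) - 1)} := fun ω hω => by
    simpa [Finset.sum_neg_distrib, le_abs] using hω
  rw [← ofReal_measureReal]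
  refine ENNReal.ofReal_le_ofReal <| (measureReal_mono hsub).trans <|
    (measureReal_union_le _ _).trans ?_
  linarith

theorem bernoulliField_inter_abs_sum_ge_le (hp : (0 : ℝ) < p) {T : Finset W} {H : Set (W → Bool)}
    {c : W → (W → Bool) → ℝ} {δ D ε : ℝ} (hδ : 0 < δ) (hD : 0 < D) (hε : 0 ≤ ε)
    (hH : MeasurableSet H) (hc : ∀ u, Measurable (c u))
    (hHT : DependsOn (· ∈ H) (T : Set W)ᶜ) (hcT : ∀ u ∈ T, DependsOn (c u) (T : Set W)ᶜ)
    (hcδ : ∀ ω ∈ H, ∀ u ∈ T, |c u ω| ≤ δ) (hcD : ∀ ω ∈ H, ∑ u ∈ T, |c u ω| ≤ D) :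
    bernoulliField W p (H ∩ {ω | ε ≤ |∑ u ∈ T, c u ω * (labelWeight p (ω u) - 1)|}) ≤
      ENNReal.ofReal (2 * exp (-(2 * p ^ 2 * ε ^ 2 / (δ * D)))) := by
  classical
  have hlabel : Measurable (labelWeight p) := measurable_of_countable _
  have hE : MeasurableSet (H ∩ {ω | ε ≤ |∑ u ∈ T, c u ω * (labelWeight p (ω u) - 1)|}) :=
    hH.inter <| measurableSet_le measurable_const <| by fun_prop
  refine infinitePi_le_of_forall_piecewise _ (T : Set W) hE fun ω => ?_
  change bernoulliField W p _ ≤ _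
  have hoff (η : W → Bool) : ∀ w ∈ (T : Set W)ᶜ, (T : Set W).piecewise η ω w = ω w :=
    fun w hw => piecewise_eq_of_notMem _ _ _ hw
  have hsum (η : W → Bool) : ∑ u ∈ T, c u ((T : Set W).piecewise η ω) *
      (labelWeight p ((T : Set W).piecewise η ω u) - 1) =
        ∑ u ∈ T, c u ω * (labelWeight p (η u) - 1) :=
    Finset.sum_congr rfl fun u hu => by
      rw [hcT u hu (hoff η), piecewise_eq_of_mem _ _ _ (Finset.mem_coe.2 hu)]
  simp only [mem_inter_iff, iff_of_eq (hHT (hoff _)), Set.mem_ofPred_eq, hsum]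
  by_cases hω : ω ∈ H
  · simpa [hω] using bernoulliField_abs_sum_ge_le hp T hδ hD (hcδ ω hω) (hcD ω hω) hε
  · simp [hω]

end Field

theorem eq_bernoulliField_of_isBernoulliPerc {d M : ℕ} {p : unitInterval}
    {P : Measure (PercSpace d M)} (hP : IsBernoulliPerc d M p P) :
    P = bernoulliField (Word d M) p := by
  have := hP.1
  let μ : Word d M → Measure Bool := fun _ => bernoulliMeasure true false p
  suffices hlim : IsProjectiveLimit P fun I : Finset (Word d M) => Measure.pi fun i : I => μ i from
    hlim.unique (Measure.isProjectiveLimit_infinitePi μ)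
  refine fun I => Measure.ext_of_singleton fun b => ?_
  have hpre : {ω : PercSpace d M | I.restrict ω = b} =
      {ω : PercSpace d M | ∀ w ∈ I, ω w = if h : w ∈ I then b ⟨w, h⟩ else true} := by
    ext ω
    simp +contextual [funext_iff]
  have hfactor (c : Bool) : bernoulliMeasure true false p {c} =
      if c then ENNReal.ofReal p else ENNReal.ofReal (1 - p) := by
    cases c <;> simp [ENNReal.ofReal, Real.toNNReal_of_nonneg, p.2.1, p.2.2,
      unitInterval.toNNReal] <;> rfl
  rw [Measure.map_apply (by fun_prop) (.singleton b)]
  change P {ω | I.restrict ω = b} = _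
  rw [hpre, hP.2, Measure.pi_singleton, ← Finset.prod_coe_sort]
  exact Finset.prod_congr rfl fun w _ => by simp [μ, hfactor]

section Words

variable {A : Type*} [Finite A]

/-- The words of length `n` over the alphabet `A`, that is, level `n` of the `A`-ary tree. -/
def words (A : Type*) [Finite A] (n : ℕ) : Finset (List A) := (List.finite_length_eq A n).toFinset

@[simp]
theorem mem_words {n : ℕ} {w : List A} : w ∈ words A n ↔ w.length = n := by
  simp [words]

theorem words_zero : words A 0 = {[]} := by
  ext w; simp

theorem sum_words_succ {A : Type*} [Fintype A] (n : ℕ) (f : List A → ℝ) :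
    ∑ w ∈ words A (n + 1), f w = ∑ v ∈ words A n, ∑ c, f (v ++ [c]) := by
  rw [← Finset.sum_product']
  refine (Finset.sum_bij (fun x _ => x.1 ++ [x.2]) (fun x hx => ?_) (fun x _ y _ h => ?_)
    (fun w hw => ?_) fun _ _ => rfl).symm
  · simpa using hx
  · exact Prod.ext (List.append_inj_left' h rfl) (by simpa using List.append_inj_right' h rfl)
  · have hne : w ≠ [] := by rintro rfl; simp at hw
    refine ⟨(w.dropLast, w.getLast hne), ?_, List.dropLast_append_getLast hne⟩
    simp_all

theorem card_words {A : Type*} [Fintype A] (n : ℕ) :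
    ((words A n).card : ℝ) = (Fintype.card A : ℝ) ^ n := by
  induction n with
  | zero => simp [words_zero]
  | succ n ih =>
    rw [Finset.card_eq_sum_ones, Nat.cast_sum, sum_words_succ, pow_succ, ← ih]
    simp

end Words

section Density

variable {A : Type*}

/-- The density at the word `w` of the percolation measure started at level `k`: the product of
the normalized labels of the prefixes of `w` of length larger than `k`. -/
def density (k : ℕ) (p : ℝ) (ω : List A → Bool) (w : List A) : ℝ :=
  ∏ j ∈ Finset.Ioc k w.length, labelWeight p (ω (w.take j))

variable {k : ℕ} {p : unitInterval} {w : List A} {ω : List A → Bool}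

theorem density_of_length_le (hw : w.length ≤ k) : density k p ω w = 1 := by
  rw [density, Finset.Ioc_eq_empty_of_le hw, Finset.prod_empty]

theorem density_take_succ {j : ℕ} (hkj : k ≤ j) (hj : j < w.length) :
    density k p ω (w.take (j + 1)) =
      density k p ω (w.take j) * labelWeight p (ω (w.take (j + 1))) := by
  unfold density
  rw [List.length_take_of_le hj, List.length_take_of_le hj.le, Finset.prod_Ioc_succ_top (by lia),
    List.take_take, min_self]
  congr 1
  refine Finset.prod_congr rfl fun i hi => ?_
  have := (Finset.mem_Ioc.1 hi).2
  rw [List.take_take, List.take_take, min_eq_left this, min_eq_left (by lia)]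

theorem density_concat (hk : k ≤ w.length) (c : A) :
    density k p ω (w ++ [c]) = density k p ω w * labelWeight p (ω (w ++ [c])) := by
  have h := density_take_succ (p := p) (ω := ω) hk (show w.length < (w ++ [c]).length by simp)
  rwa [List.take_left, List.take_of_length_le (by simp)] at h

theorem density_nonneg : 0 ≤ density k p ω w :=
  Finset.prod_nonneg fun _ _ => labelWeight_nonneg p _

theorem density_le (hp : (0 : ℝ) < p) : density k p ω w ≤ (p : ℝ)⁻¹ ^ w.length := calc
  density k p ω w ≤ ∏ _j ∈ Finset.Ioc k w.length, (p : ℝ)⁻¹ :=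
    Finset.prod_le_prod (fun _ _ => labelWeight_nonneg p _) fun _ _ => labelWeight_le_inv p _
  _ = (p : ℝ)⁻¹ ^ (w.length - k) := by simp
  _ ≤ (p : ℝ)⁻¹ ^ w.length := pow_le_pow_right₀ ((one_le_inv₀ hp).2 p.2.2) (Nat.sub_le _ _)

theorem eq_true_of_density_pos (h : 0 < density k p ω w) {u : List A} (hu : u <+: w)
    (hk : k < u.length) : ω u = true := by
  by_contra hω
  refine h.ne' (Finset.prod_eq_zero (Finset.mem_Ioc.2 ⟨hk, hu.length_le⟩) ?_)
  rw [← List.prefix_iff_eq_take.1 hu, labelWeight, if_neg hω]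

theorem density_congr {η : List A → Bool} (h : ∀ u, u <+: w → k < u.length → ω u = η u) :
    density k p ω w = density k p η w :=
  Finset.prod_congr rfl fun j hj => by
    have hj := Finset.mem_Ioc.1 hj
    rw [h _ (List.take_prefix _ _) (by rw [List.length_take_of_le hj.2]; exact hj.1)]

@[fun_prop]
theorem measurable_density (k : ℕ) (p : unitInterval) (w : List A) :
    Measurable fun ω => density k p ω w := by
  have : Measurable (labelWeight p) := measurable_of_countable _
  unfold density
  fun_prop

theorem dependsOn_density {T : Set (List A)} (hT : ∀ u ∈ T, ¬ u <+: w) :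
    DependsOn (fun ω => density k p ω w) Tᶜ :=
  fun _ _ h => density_congr fun u hu _ => h u fun hmem => hT u hmem hu

theorem dependsOn_density_of_length_lt {T : Set (List A)} (hT : ∀ u ∈ T, w.length < u.length) :
    DependsOn (fun ω => density k p ω w) Tᶜ :=
  dependsOn_density fun u hu hpre => (hT u hu).not_ge hpre.length_le

end Density

section Counting

variable {A : Type*} {k n : ℕ} {p : unitInterval} {S : Finset (List A)}

theorem sum_density_take_of_le {j : ℕ} (hjk : j ≤ k) (ω : List A → Bool) :
    ∑ w ∈ S, density k p ω (w.take j) = S.card := by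
  rw [Finset.sum_congr rfl fun w _ => density_of_length_le ((List.length_take_le _ _).trans hjk)]
  simp

variable [Finite A] [DecidableEq A]

theorem sum_density_take_mul (hS : S ⊆ words A n) {j : ℕ} (hj : j < n) (ω : List A → Bool)
    (g : List A → ℝ) :
    ∑ w ∈ S, density k p ω (w.take j) * g (w.take (j + 1)) =
      ∑ u ∈ words A (j + 1), ((S.filter (u <+: ·)).card * density k p ω u.dropLast) * g u := by
  have hlen {w : List A} (hw : w ∈ S) : w.length = n := mem_words.1 (hS hw)
  have hfiber : ∀ w ∈ S, w.take (j + 1) ∈ words A (j + 1) := fun w hw => by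
    simp [hlen hw, Nat.succ_le_of_lt hj]
  rw [← Finset.sum_fiberwise_of_maps_to hfiber]
  refine Finset.sum_congr rfl fun u hu => ?_
  have hfilter : S.filter (fun w => w.take (j + 1) = u) = S.filter (u <+: ·) :=
    Finset.filter_congr fun w _ => by rw [List.prefix_iff_eq_take, mem_words.1 hu, eq_comm]
  rw [← hfilter, mul_assoc, ← nsmul_eq_mul]
  refine Finset.sum_eq_card_nsmul fun w hw => ?_
  obtain ⟨hwS, rfl⟩ := Finset.mem_filter.1 hw
  have hdrop : (w.take (j + 1)).dropLast = w.take j := by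
    rw [List.dropLast_eq_take, List.take_take, List.length_take_of_le (by rw [hlen hwS]; exact hj)]
    simp
  rw [hdrop]

theorem sum_density_take_succ_sub (hS : S ⊆ words A n) {j : ℕ} (hkj : k ≤ j) (hj : j < n)
    (ω : List A → Bool) :
    ∑ w ∈ S, density k p ω (w.take (j + 1)) - ∑ w ∈ S, density k p ω (w.take j) =
      ∑ u ∈ words A (j + 1), ((S.filter (u <+: ·)).card * density k p ω u.dropLast) *
        (labelWeight p (ω u) - 1) := by
  rw [← sum_density_take_mul hS hj ω fun u => labelWeight p (ω u) - 1, ← Finset.sum_sub_distrib]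
  refine Finset.sum_congr rfl fun w hw => ?_
  rw [density_take_succ hkj (by rwa [mem_words.1 (hS hw)]), mul_sub_one]

theorem bernoulliField_sum_density_jump_le (hp : (0 : ℝ) < p) (hS : S ⊆ words A n) {j : ℕ}
    (hkj : k ≤ j) (hj : j < n) {D l : ℝ} (hD : 0 < D) (hl : 1 ≤ l)
    (hSD : ∀ u, (S.filter (u <+: ·)).card * (p : ℝ)⁻¹ ^ u.length ≤ D) :
    bernoulliField (List A) p ({ω | ∑ w ∈ S, density k p ω (w.take j) ≤ D * (1 + j * l)} ∩
      {ω | D * l ≤ |∑ w ∈ S, density k p ω (w.take (j + 1)) -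
        ∑ w ∈ S, density k p ω (w.take j)|}) ≤
      ENNReal.ofReal (2 * exp (-(2 * p ^ 2 * l / (n + 1)))) := by
  simp only [sum_density_take_succ_sub hS hkj hj]
  refine (bernoulliField_inter_abs_sum_ge_le hp (δ := D) (D := D * (1 + j * l))
    (c := fun u ω => (S.filter (u <+: ·)).card * density k p ω u.dropLast)
    hD (by positivity) (by positivity) (measurableSet_le (by fun_prop) measurable_const)
    (fun u => by fun_prop) (fun ω η h => ?_) (fun u hu ω η h => ?_)
    (fun ω _ u _ => ?_) fun ω hω => ?_).trans ?_
  · simp only [Set.mem_ofPred_eq, eq_iff_iff]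
    rw [Finset.sum_congr rfl fun w _ => dependsOn_density_of_length_lt (fun u hu => by
      simp [mem_words.1 hu]) h]
  · exact congrArg _ (dependsOn_density_of_length_lt (fun v hv => by
      simp [mem_words.1 hu, mem_words.1 hv]) h)
  · rw [abs_of_nonneg (mul_nonneg (Nat.cast_nonneg _) density_nonneg)]
    refine (mul_le_mul_of_nonneg_left ((density_le hp).trans ?_) (Nat.cast_nonneg _)).trans (hSD u)
    exact pow_le_pow_right₀ ((one_le_inv₀ hp).2 p.2.2) (by simp)
  · refine le_of_eq_of_le ?_ hω
    rw [Finset.sum_congr rfl fun u _ =>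
      abs_of_nonneg (mul_nonneg (Nat.cast_nonneg _) density_nonneg)]
    simpa using (sum_density_take_mul (k := k) (p := p) hS hj ω fun _ => 1).symm
  · refine ENNReal.ofReal_le_ofReal (mul_le_mul_of_nonneg_left (exp_le_exp.2 ?_) zero_le_two)
    rw [neg_le_neg_iff, div_le_div_iff₀ (by positivity) (by positivity)]
    have hjn : (j : ℝ) + 1 ≤ n := by exact_mod_cast hj
    have : 1 + j * l ≤ l * (n + 1) := by nlinarith
    calc 2 * (p : ℝ) ^ 2 * l * (D * (D * (1 + j * l)))
        = 2 * (p : ℝ) ^ 2 * D ^ 2 * l * (1 + j * l) := by ring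
      _ ≤ 2 * (p : ℝ) ^ 2 * D ^ 2 * l * (l * (n + 1)) := by gcongr
      _ = 2 * (p : ℝ) ^ 2 * (D * l) ^ 2 * (n + 1) := by ring

theorem bernoulliField_sum_density_gt_le (hp : (0 : ℝ) < p) (hS : S ⊆ words A n) {D l : ℝ}
    (hD : 0 < D) (hl : 1 ≤ l)
    (hSD : ∀ u, (S.filter (u <+: ·)).card * (p : ℝ)⁻¹ ^ u.length ≤ D) :
    bernoulliField (List A) p {ω | D * (1 + n * l) < ∑ w ∈ S, density k p ω w} ≤
      n * ENNReal.ofReal (2 * exp (-(2 * p ^ 2 * l / (n + 1)))) := by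
  set q := ENNReal.ofReal (2 * exp (-(2 * p ^ 2 * l / (n + 1))))
  have hcard : (S.card : ℝ) ≤ D := by simpa using hSD []
  have hlevel : ∀ j ≤ n, bernoulliField (List A) p
      {ω | D * (1 + j * l) < ∑ w ∈ S, density k p ω (w.take j)} ≤ j * q := by
    intro j
    induction j with
    | zero => intro _; simp only [sum_density_take_of_le (Nat.zero_le k)]; simp [hcard.not_gt]
    | succ j ih =>
      intro hj
      rcases le_or_gt (j + 1) k with hk | hk
      · have hle : (S.card : ℝ) ≤ D * (1 + (j + 1 : ℕ) * l) :=
          hcard.trans (le_mul_of_one_le_right hD.le (le_add_of_nonneg_right (by positivity)))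
        simp only [sum_density_take_of_le hk, hle.not_gt]
        simp
      · refine (measure_mono fun ω hω => ?_).trans <| (measure_union_le _ _).trans <|
          (add_le_add (ih (by lia)) (bernoulliField_sum_density_jump_le hp hS
            (Nat.le_of_lt_succ hk) hj hD hl hSD)).trans_eq (by push_cast; ring)
        rw [mem_union, or_iff_not_imp_left]
        intro hle
        simp only [Set.mem_ofPred_eq, not_lt] at hle hω
        push_cast at hω
        exact ⟨hle, (by linarith : D * l ≤ _).trans (le_abs_self _)⟩
  have htake (ω : List A → Bool) :
      ∑ w ∈ S, density k p ω (w.take n) = ∑ w ∈ S, density k p ω w :=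
    Finset.sum_congr rfl fun w hw => by rw [List.take_of_length_le (mem_words.1 (hS hw)).le]
  simpa only [htake] using hlevel n le_rfl

end Counting

/-! ### Link kernels -/

section LinkMass

variable {A : Type*} [Finite A]

/-- The mass of the links from the word `u` to the percolation measure at level `n`. -/
def rowMass (σ : List A → List A → ℝ) (k : ℕ) (p : ℝ) (ω : List A → Bool) (u : List A) (n : ℕ) :
    ℝ :=
  ∑ w' ∈ words A n, σ u w' * density k p ω w'

/-- The mass of the links between the percolation measures at the levels `m` and `n`. -/
def linkMass (σ : List A → List A → ℝ) (k : ℕ) (p : ℝ) (ω : List A → Bool) (m n : ℕ) : ℝ :=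
  ∑ w ∈ words A m, density k p ω w * rowMass σ k p ω w n

/-- The number of level-`n` words linked to `v`, weighted by their density. -/
def linkedCount (σ : List A → List A → ℝ) (k : ℕ) (p : ℝ) (ω : List A → Bool) (v : List A)
    (n : ℕ) : ℝ :=
  ∑ w' ∈ (words A n).filter fun w' => 0 < σ v w', density k p ω w'

variable {σ : List A → List A → ℝ} {k m n : ℕ} {p : unitInterval} {ω : List A → Bool}

@[fun_prop]
theorem measurable_rowMass (u : List A) : Measurable fun ω => rowMass σ k p ω u n := by
  unfold rowMass; fun_prop

@[fun_prop]
theorem measurable_linkMass : Measurable fun ω => linkMass σ k p ω m n := by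
  unfold linkMass; fun_prop

@[fun_prop]
theorem measurable_linkedCount (v : List A) : Measurable fun ω => linkedCount σ k p ω v n := by
  unfold linkedCount; fun_prop

theorem linkMass_flip : linkMass (flip σ) k p ω n m = linkMass σ k p ω m n := by
  simp only [linkMass, rowMass, Finset.mul_sum]
  rw [Finset.sum_comm]
  exact Finset.sum_congr rfl fun w _ => Finset.sum_congr rfl fun w' _ => by
    simp only [flip]; ring

end LinkMass

section LinkKernel

variable {A : Type*} [Fintype A] [DecidableEq A]

/-- A link kernel: the word pair `(w, w')` gets the probability `σ w w'` that the endpoints of a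
random segment have addresses `w` and `w'`. Pairs of positive probability are called linked. The
set `S` tells the possible addresses of the two endpoints apart. -/
structure IsLinkKernel (σ : List A → List A → ℝ) (S : Set (List A)) (C β γ : ℝ) : Prop where
  nonneg (w w') : 0 ≤ σ w w'
  sum_left (w w') : ∑ c, σ (w ++ [c]) w' = σ w w'
  sum_right (w w') : ∑ c, σ w (w' ++ [c]) = σ w w'
  total : σ [] [] = 1
  le_mul_pow {w w'} : w.length = w'.length → σ w w' ≤ C * β ^ w.length
  card_left_le (v w') :
    (((words A w'.length).filter fun w => 0 < σ w w').filter (v <+: ·)).card ≤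
      C * γ ^ (w'.length - v.length)
  card_right_le (v w) :
    (((words A w.length).filter fun w' => 0 < σ w w').filter (v <+: ·)).card ≤
      C * γ ^ (w.length - v.length)
  left_mem {w w'} : w ≠ [] → 0 < σ w w' → w ∈ S
  right_notMem {w w'} : w' ≠ [] → 0 < σ w w' → w' ∉ S

variable {σ : List A → List A → ℝ} {S : Set (List A)} {C β γ : ℝ}

namespace IsLinkKernel

theorem flip (h : IsLinkKernel σ S C β γ) : IsLinkKernel (flip σ) Sᶜ C β γ where
  nonneg _ _ := h.nonneg _ _
  sum_left _ _ := h.sum_right _ _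
  sum_right _ _ := h.sum_left _ _
  total := h.total
  le_mul_pow hlen := hlen ▸ h.le_mul_pow hlen.symm
  card_left_le := h.card_right_le
  card_right_le := h.card_left_le
  left_mem := h.right_notMem
  right_notMem hw hpos := not_not.2 (h.left_mem hw hpos)

theorem one_le (h : IsLinkKernel σ S C β γ) : 1 ≤ C := by
  simpa [h.total] using h.le_mul_pow (w := []) (w' := []) rfl

theorem le_of_prefix (h : IsLinkKernel σ S C β γ) {v u : List A} (hvu : v <+: u) (w' : List A) :
    σ u w' ≤ σ v w' := by
  obtain ⟨s, rfl⟩ := hvu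
  induction s using List.reverseRecOn with
  | nil => simp
  | append_singleton s c ih =>
    rw [← List.append_assoc]
    refine le_trans ?_ ih
    rw [← h.sum_left (v ++ s)]
    exact Finset.single_le_sum (f := fun c => σ (v ++ s ++ [c]) w')
      (fun _ _ => h.nonneg _ _) (Finset.mem_univ c)

end IsLinkKernel

variable {k m n : ℕ} {p : unitInterval} {ω η : List A → Bool}

namespace IsLinkKernel

theorem rowMass_nonneg (h : IsLinkKernel σ S C β γ) {u : List A} : 0 ≤ rowMass σ k p ω u n :=
  Finset.sum_nonneg fun _ _ => mul_nonneg (h.nonneg _ _) density_nonneg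

theorem sum_rowMass_concat (h : IsLinkKernel σ S C β γ) (v : List A) :
    ∑ c, rowMass σ k p ω (v ++ [c]) n = rowMass σ k p ω v n := by
  unfold rowMass
  rw [Finset.sum_comm]
  exact Finset.sum_congr rfl fun w' _ => by rw [← Finset.sum_mul, h.sum_left]

theorem sum_density_dropLast_mul_rowMass (h : IsLinkKernel σ S C β γ) :
    ∑ u ∈ words A (n + 1), density k p ω u.dropLast * rowMass σ k p ω u m =
      linkMass σ k p ω n m := by
  simp only [sum_words_succ, List.dropLast_concat, ← Finset.mul_sum, h.sum_rowMass_concat, linkMass]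

theorem linkMass_succ_left_sub (h : IsLinkKernel σ S C β γ) (hk : k ≤ n) :
    linkMass σ k p ω (n + 1) m - linkMass σ k p ω n m =
      ∑ u ∈ words A (n + 1), (density k p ω u.dropLast * rowMass σ k p ω u m) *
        (labelWeight p (ω u) - 1) := by
  rw [← h.sum_density_dropLast_mul_rowMass (n := n), linkMass, ← Finset.sum_sub_distrib]
  simp only [sum_words_succ, List.dropLast_concat]
  refine Finset.sum_congr rfl fun v hv => Finset.sum_congr rfl fun c _ => ?_
  rw [density_concat (hk.trans (mem_words.1 hv).ge)]
  ring

theorem linkMass_self_eq_one (h : IsLinkKernel σ S C β γ) : linkMass σ k p ω k k = 1 := by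
  have hmass (i j : ℕ) : ∑ w ∈ words A i, ∑ w' ∈ words A j, σ w w' = 1 := by
    induction i with
    | zero =>
      induction j with
      | zero => simp [words_zero, h.total]
      | succ j ih => simpa only [sum_words_succ, h.sum_right] using ih
    | succ i ih =>
      rw [sum_words_succ, ← ih]
      refine Finset.sum_congr rfl fun w _ => ?_
      rw [Finset.sum_comm]
      exact Finset.sum_congr rfl fun w' _ => h.sum_left w w'
  rw [← hmass k k]
  refine Finset.sum_congr rfl fun w hw => ?_
  rw [density_of_length_le (mem_words.1 hw).le, one_mul]
  exact Finset.sum_congr rfl fun w' hw' => by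
    rw [density_of_length_le (mem_words.1 hw').le, mul_one]

theorem rowMass_le (h : IsLinkKernel σ S C β γ) {v : List A} (hv : v.length = m) :
    rowMass σ k p ω v m ≤ C * β ^ m * linkedCount σ k p ω v m := by
  rw [linkedCount, Finset.mul_sum, Finset.sum_filter]
  refine Finset.sum_le_sum fun w' hw' => ?_
  split_ifs with hpos
  · have := h.le_mul_pow (hv.trans (mem_words.1 hw').symm)
    rw [hv] at this
    exact mul_le_mul_of_nonneg_right this density_nonneg
  · rw [le_antisymm (not_lt.1 hpos) (h.nonneg _ _), zero_mul]

theorem rowMass_le_of_forall_linkedCount_le (h : IsLinkKernel σ S C β γ) {B : ℝ} (hβ : 0 ≤ β)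
    (hmn : m ≤ n) (hB : ∀ v ∈ words A m, linkedCount σ k p ω v m ≤ B) {u : List A}
    (hu : u.length = n) :
    rowMass σ k p ω u m ≤ C * β ^ m * B := by
  have hlen : (u.take m).length = m := List.length_take_of_le (by rwa [hu])
  have := h.one_le
  calc rowMass σ k p ω u m ≤ rowMass σ k p ω (u.take m) m :=
        Finset.sum_le_sum fun _ _ =>
          mul_le_mul_of_nonneg_right (h.le_of_prefix (List.take_prefix m u) _) density_nonneg
    _ ≤ C * β ^ m * linkedCount σ k p ω (u.take m) m := h.rowMass_le hlen
    _ ≤ C * β ^ m * B := mul_le_mul_of_nonneg_left (hB _ (mem_words.2 hlen)) (by positivity)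

theorem dependsOn_density_of_linked (h : IsLinkKernel σ S C β γ) (hm : m ≤ n + 1) {v w' : List A}
    (hw' : w'.length = m) (hpos : 0 < σ v w') :
    DependsOn (fun ω => density k p ω w') {u | u.length = n + 1 ∧ u ∈ S}ᶜ := by
  refine dependsOn_density ?_
  rintro u ⟨hu, huS⟩ hpre
  obtain rfl := hpre.eq_of_length_le (by lia)
  exact h.right_notMem (by rintro rfl; simp at hu) hpos huS

theorem dependsOn_rowMass (h : IsLinkKernel σ S C β γ) (hm : m ≤ n + 1) (v : List A) :
    DependsOn (fun ω => rowMass σ k p ω v m) {u | u.length = n + 1 ∧ u ∈ S}ᶜ := fun ω η heq => by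
  refine Finset.sum_congr rfl fun w' hw' => ?_
  rcases (h.nonneg v w').eq_or_lt with hzero | hpos
  · rw [← hzero, zero_mul, zero_mul]
  · exact congrArg _ (h.dependsOn_density_of_linked hm (mem_words.1 hw') hpos heq)

theorem dependsOn_linkedCount (h : IsLinkKernel σ S C β γ) (hm : m ≤ n + 1) (v : List A) :
    DependsOn (fun ω => linkedCount σ k p ω v m) {u | u.length = n + 1 ∧ u ∈ S}ᶜ :=
  fun _ _ heq => Finset.sum_congr rfl fun w' hw' => by
    obtain ⟨hw', hpos⟩ := Finset.mem_filter.1 hw'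
    exact h.dependsOn_density_of_linked hm (mem_words.1 hw') hpos heq

theorem dependsOn_linkMass (h : IsLinkKernel σ S C β γ) (hm : m ≤ n + 1) :
    DependsOn (fun ω => linkMass σ k p ω n m) {u | u.length = n + 1 ∧ u ∈ S}ᶜ := fun _ _ heq =>
  Finset.sum_congr rfl fun w hw => congrArg₂ _
    (dependsOn_density_of_length_lt (fun u hu => by simp [mem_words.1 hw, hu.1]) heq)
    (h.dependsOn_rowMass hm w heq)

theorem rowMass_eq_zero (h : IsLinkKernel σ S C β γ) {u : List A} (hu : u ≠ [])
    (huS : u ∉ S) : rowMass σ k p ω u m = 0 :=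
  Finset.sum_eq_zero fun w' _ => by
    rw [((h.nonneg u w').eq_or_lt.resolve_right (mt (h.left_mem hu) huS)).symm, zero_mul]

theorem bernoulliField_abs_linkMass_succ_left_sub_ge_le (h : IsLinkKernel σ S C β γ)
    (hp : (0 : ℝ) < p) (hβ : 0 < β) (hk : k ≤ n) (hm : m ≤ n + 1) {B D ε : ℝ} (hB : 0 < B)
    (hD : 0 < D) (hε : 0 ≤ ε) :
    bernoulliField (List A) p
      ({ω | linkMass σ k p ω n m ≤ D ∧ ∀ v ∈ words A m, linkedCount σ k p ω v m ≤ B} ∩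
        {ω | ε ≤ |linkMass σ k p ω (n + 1) m - linkMass σ k p ω n m|}) ≤
      ENNReal.ofReal (2 * exp (-(2 * p ^ 2 * ε ^ 2 / ((p : ℝ)⁻¹ ^ n * (C * β ^ m * B) * D)))) := by
  classical
  have hC : 0 < C := zero_lt_one.trans_le h.one_le
  set T := (words A (n + 1)).filter (· ∈ S) with hT
  have hTcoe : (T : Set (List A)) = {u | u.length = n + 1 ∧ u ∈ S} := by ext; simp [hT]
  have hlen {u : List A} (hu : u ∈ T) : u.length = n + 1 := mem_words.1 (Finset.mem_filter.1 hu).1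
  let c (u : List A) (ω : List A → Bool) := density k p ω u.dropLast * rowMass σ k p ω u m
  have hc (u ω) : |c u ω| = c u ω := abs_of_nonneg (mul_nonneg density_nonneg h.rowMass_nonneg)
  have hsum (f : List A → ℝ) (ω) : ∑ u ∈ words A (n + 1), c u ω * f u = ∑ u ∈ T, c u ω * f u := by
    refine (Finset.sum_filter_of_ne fun u hu hne => by_contra fun huS => hne ?_).symm
    have hnil : u ≠ [] := by rintro rfl; simp at hu
    simp only [c, h.rowMass_eq_zero hnil huS, mul_zero, zero_mul]
  simp only [h.linkMass_succ_left_sub hk]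
  change bernoulliField _ p (_ ∩ {ω | ε ≤ |∑ u ∈ words A (n + 1), c u ω * _|}) ≤ _
  simp only [hsum]
  refine bernoulliField_inter_abs_sum_ge_le hp (by positivity) hD hε ?_
    (fun u => (measurable_density _ _ _).mul (measurable_rowMass _))
    (fun ω η heq => ?_) (fun u hu ω η heq => ?_) (fun ω hω u hu => ?_) fun ω hω => ?_
  · simp only [ofPred_and, ofPred_forall]
    exact (measurableSet_le measurable_linkMass measurable_const).inter <|
      Finset.measurableSet_biInter _ fun v _ =>
        measurableSet_le (measurable_linkedCount v) measurable_const
  · rw [hTcoe] at heq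
    simp only [Set.mem_ofPred_eq, h.dependsOn_linkMass hm heq, h.dependsOn_linkedCount hm _ heq]
  · rw [hTcoe] at heq
    exact congrArg₂ (· * ·)
      (dependsOn_density_of_length_lt (fun v hv => by simp [hlen hu, hv.1]) heq)
      (h.dependsOn_rowMass hm u heq)
  · rw [hc]
    exact mul_le_mul ((density_le hp).trans_eq (by simp [hlen hu]))
      (h.rowMass_le_of_forall_linkedCount_le hβ.le hm hω.2 (hlen hu)) h.rowMass_nonneg
      (by positivity)
  · refine le_of_eq_of_le ?_ hω.1
    simpa [hc, c, h.sum_density_dropLast_mul_rowMass] using (hsum 1 ω).symm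

end IsLinkKernel
end LinkKernel

/-- The bound imposed on the weighted number of words linked to a given word of level `m`. -/
def countBound (C μ θ : ℝ) (m : ℕ) : ℝ := C * μ ^ m * (1 + m * ((m + 1) * θ⁻¹ ^ m))

theorem countBound_pos {C μ θ : ℝ} (hC : 0 < C) (hμ : 0 < μ) (hθ : 0 < θ) (m : ℕ) :
    0 < countBound C μ θ m := by
  unfold countBound; positivity

theorem exists_sq_mul_pow_le {θ : ℝ} (hθ : θ ∈ Ioo (0 : ℝ) 1) :
    ∃ K > 0, ∀ m : ℕ, ((m : ℝ) + 1) ^ 2 * θ ^ m ≤ K := by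
  have hlim : Filter.Tendsto (fun m : ℕ => ((m + 1 : ℕ) : ℝ) ^ 2 * θ ^ (m + 1)) Filter.atTop
      (nhds 0) :=
    (tendsto_pow_const_mul_const_pow_of_abs_lt_one 2
      (by rw [abs_of_pos hθ.1]; exact hθ.2)).comp (Filter.tendsto_add_atTop_nat 1)
  obtain ⟨K, hK⟩ := hlim.bddAbove_range
  have hK (m : ℕ) : ((m : ℝ) + 1) ^ 2 * θ ^ m * θ ≤ K := by
    simpa [pow_succ, mul_assoc] using hK (mem_range_self m)
  have hθK : θ ≤ K := by simpa using hK 0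
  exact ⟨K / θ, div_pos (hθ.1.trans_le hθK) hθ.1, fun m => (le_div_iff₀ hθ.1).2 (hK m)⟩

theorem exists_mul_countBound_le {a C β μ : ℝ} (ha : 1 ≤ a) (hC : 0 < C) (hβ : 0 < β)
    (hμ : 0 < μ) (hlt : β * μ * a < 1) :
    ∃ θ ∈ Ioo (0 : ℝ) 1, ∃ K > 0, ∀ n m : ℕ, n ≤ m →
      a ^ n * (C * β ^ m * countBound C μ θ m) ≤ K * θ ^ (3 * n) := by
  set θ := (β * μ * a) ^ ((5 : ℕ) : ℝ)⁻¹
  have hθ5 : θ ^ 5 = β * μ * a := Real.rpow_inv_natCast_pow (by positivity) (by simp)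
  have hθ : θ ∈ Ioo (0 : ℝ) 1 :=
    ⟨by positivity, Real.rpow_lt_one (by positivity) hlt (by simp)⟩
  obtain ⟨K, hK, hpoly⟩ := exists_sq_mul_pow_le hθ
  refine ⟨θ, hθ, C ^ 2 * K, by positivity, fun n m hnm => ?_⟩
  have hone : 1 ≤ θ⁻¹ ^ m := one_le_pow₀ ((one_le_inv₀ hθ.1).2 hθ.2.le)
  have hθ0 := hθ.1
  calc a ^ n * (C * β ^ m * countBound C μ θ m)
      ≤ a ^ m * (C * β ^ m * (C * μ ^ m * ((m + 1) ^ 2 * θ⁻¹ ^ m))) := by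
        unfold countBound
        gcongr
        nlinarith
    _ = C ^ 2 * (β * μ * a) ^ m * ((m + 1) ^ 2 * θ⁻¹ ^ m) := by simp only [mul_pow]; ring
    _ = C ^ 2 * ((m + 1) ^ 2 * θ ^ m) * θ ^ (3 * m) := by
        rw [← hθ5, inv_pow]; field_simp; ring
    _ ≤ C ^ 2 * K * θ ^ (3 * n) := by
        gcongr C ^ 2 * ?_ * ?_
        · exact hpoly m
        · exact pow_le_pow_of_le_one hθ0.le hθ.2.le (by lia)

namespace IsLinkKernel

variable {A : Type*} [Fintype A] [DecidableEq A] {σ : List A → List A → ℝ} {S : Set (List A)}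
  {C β γ μ θ : ℝ} {k m n : ℕ} {p : unitInterval}

theorem card_linked_mul_le (h : IsLinkKernel σ S C β γ) (hγ : 0 < γ) (hμ : γ ≤ μ) {a : ℝ}
    (ha : 0 ≤ a) (haμ : a ≤ μ) (v u : List A) :
    (((words A v.length).filter fun w' => 0 < σ v w').filter (u <+: ·)).card * a ^ u.length ≤
      C * μ ^ v.length := by
  have hC := h.one_le
  have hμ0 : 0 < μ := hγ.trans_le hμ
  rcases le_or_gt u.length v.length with hle | hlt
  · calc _ ≤ C * γ ^ (v.length - u.length) * a ^ u.length := by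
          gcongr; exact h.card_right_le u v
      _ ≤ C * μ ^ (v.length - u.length) * μ ^ u.length := by gcongr
      _ = C * μ ^ v.length := by rw [mul_assoc, ← pow_add, Nat.sub_add_cancel hle]
  · rw [Finset.filter_false_of_mem fun w hw hpre => hlt.not_ge (hpre.length_le.trans_eq
      (mem_words.1 (Finset.mem_filter.1 hw).1)), Finset.card_empty, Nat.cast_zero, zero_mul]
    positivity

theorem bernoulliField_exists_countBound_lt_le (h : IsLinkKernel σ S C β γ) (hp : (0 : ℝ) < p)
    (hγ : 0 < γ) (hμ : γ ≤ μ) (hpμ : (p : ℝ)⁻¹ ≤ μ) (hθ : θ ∈ Ioo (0 : ℝ) 1) :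
    bernoulliField (List A) p
      {ω | ∃ v ∈ words A m, countBound C μ θ m < linkedCount σ k p ω v m} ≤
      ENNReal.ofReal (Fintype.card A ^ m * (m * (2 * exp (-(2 * p ^ 2 * θ⁻¹ ^ m))))) := by
  have hC : 0 < C := zero_lt_one.trans_le h.one_le
  have hμ0 : 0 < μ := hγ.trans_le hμ
  have hl : 1 ≤ ((m : ℝ) + 1) * θ⁻¹ ^ m :=
    one_le_mul_of_one_le_of_one_le (by simp) (one_le_pow₀ ((one_le_inv₀ hθ.1).2 hθ.2.le))
  have hword : ∀ v ∈ words A m,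
      bernoulliField (List A) p {ω | countBound C μ θ m < linkedCount σ k p ω v m} ≤
        ENNReal.ofReal (m * (2 * exp (-(2 * p ^ 2 * θ⁻¹ ^ m)))) := fun v hv => by
    obtain rfl := mem_words.1 hv
    have := bernoulliField_sum_density_gt_le (k := k) hp (Finset.filter_subset _ _)
      (by positivity : 0 < C * μ ^ v.length) hl
      (h.card_linked_mul_le hγ hμ (inv_nonneg.2 hp.le) hpμ v)
    refine this.trans_eq ?_
    rw [ENNReal.ofReal_mul (Nat.cast_nonneg _), ENNReal.ofReal_natCast]
    congr 6
    field_simp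
  have hset : {ω | ∃ v ∈ words A m, countBound C μ θ m < linkedCount σ k p ω v m} =
      ⋃ v ∈ words A m, {ω | countBound C μ θ m < linkedCount σ k p ω v m} := by
    ext; simp
  rw [hset]
  refine (measure_biUnion_finset_le _ _).trans ((Finset.sum_le_sum hword).trans_eq ?_)
  rw [Finset.sum_const, nsmul_eq_mul, ← card_words,
    ENNReal.ofReal_mul (Nat.cast_nonneg (words A m).card), ENNReal.ofReal_natCast]

theorem bernoulliField_linkMass_half_step_le [Nonempty A] (h : IsLinkKernel σ S C β γ)
    (hp : (0 : ℝ) < p) (hβ : 0 < β) (hγ : 0 < γ) (hμ : γ ≤ μ) (hpμ : (p : ℝ)⁻¹ ≤ μ)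
    (hθ : θ ∈ Ioo (0 : ℝ) 1) {K : ℝ}
    (hK : (p : ℝ)⁻¹ ^ n * (C * β ^ m * countBound C μ θ m) ≤ K * θ ^ (3 * n))
    (hk : k ≤ n) (hnm : n ≤ m) (hm : m ≤ n + 1) {c : ℝ} (hc : 0 ≤ c) (hcp : c ≤ 2 * p ^ 2)
    (hcK : c * (3 * K) ≤ 2 * p ^ 2) :
    bernoulliField (List A) p {ω | linkMass σ k p ω n m ≤ 3 ∧
      θ ^ n ≤ |linkMass σ k p ω (n + 1) m - linkMass σ k p ω n m|} ≤
      ENNReal.ofReal (4 * ((n + 1) * Fintype.card A ^ (n + 1) * exp (-(c * θ⁻¹ ^ n)))) := by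
  have hC : 0 < C := zero_lt_one.trans_le h.one_le
  have hB : 0 < countBound C μ θ m := countBound_pos hC (hγ.trans_le hμ) hθ.1 m
  have hθ0 := hθ.1
  have hinv : 1 ≤ θ⁻¹ := (one_le_inv₀ hθ.1).2 hθ.2.le
  set N := (Fintype.card A : ℝ)
  have hN : 1 ≤ N := Nat.one_le_cast.2 Fintype.card_pos
  have hcount := h.bernoulliField_exists_countBound_lt_le (k := k) (m := m) hp hγ hμ hpμ hθ
  have hstep := h.bernoulliField_abs_linkMass_succ_left_sub_ge_le hp hβ hk hm hB three_pos
    (pow_nonneg hθ.1.le n)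
  refine (measure_mono fun ω hω => ?_).trans <| (measure_union_le _ _).trans <|
    (add_le_add hcount hstep).trans ?_
  · rw [mem_union, or_iff_not_imp_left]
    intro hnot
    simp only [Set.mem_ofPred_eq, not_exists, not_and, not_lt] at hnot
    exact ⟨⟨hω.1, hnot⟩, hω.2⟩
  rw [← ENNReal.ofReal_add (by positivity) (by positivity)]
  refine ENNReal.ofReal_le_ofReal ?_
  have hcountexp : N ^ m * (m * (2 * exp (-(2 * p ^ 2 * θ⁻¹ ^ m)))) ≤
      N ^ (n + 1) * ((n + 1) * (2 * exp (-(c * θ⁻¹ ^ n)))) := by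
    gcongr
    exact_mod_cast hm
  have hstepexp : c * θ⁻¹ ^ n ≤
      2 * p ^ 2 * (θ ^ n) ^ 2 / ((p : ℝ)⁻¹ ^ n * (C * β ^ m * countBound C μ θ m) * 3) := by
    rw [le_div_iff₀ (by positivity)]
    calc c * θ⁻¹ ^ n * ((p : ℝ)⁻¹ ^ n * (C * β ^ m * countBound C μ θ m) * 3)
        ≤ c * θ⁻¹ ^ n * (K * θ ^ (3 * n) * 3) := by gcongr
      _ = c * (3 * K) * (θ ^ n) ^ 2 := by rw [inv_pow]; field_simp; ring
      _ ≤ 2 * p ^ 2 * (θ ^ n) ^ 2 := by gcongr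
  have hone : 1 ≤ (n + 1) * N ^ (n + 1) :=
    one_le_mul_of_one_le_of_one_le (by simp) (one_le_pow₀ hN)
  have hexp := exp_le_exp.2 (neg_le_neg hstepexp)
  nlinarith [exp_pos (-(c * θ⁻¹ ^ n))]

theorem bernoulliField_linkMass_step_le [Nonempty A] (h : IsLinkKernel σ S C β γ)
    (hp : (0 : ℝ) < p) (hβ : 0 < β) (hγ : 0 < γ) (hμ : γ ≤ μ) (hpμ : (p : ℝ)⁻¹ ≤ μ)
    (hθ : θ ∈ Ioo (0 : ℝ) 1) {K : ℝ}
    (hK : ∀ m, n ≤ m → (p : ℝ)⁻¹ ^ n * (C * β ^ m * countBound C μ θ m) ≤ K * θ ^ (3 * n))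
    (hk : k ≤ n) {c : ℝ} (hc : 0 ≤ c) (hcp : c ≤ 2 * p ^ 2) (hcK : c * (3 * K) ≤ 2 * p ^ 2) :
    bernoulliField (List A) p {ω | linkMass σ k p ω n n ≤ 2 ∧
      2 * θ ^ n < |linkMass σ k p ω (n + 1) (n + 1) - linkMass σ k p ω n n|} ≤
      ENNReal.ofReal (8 * ((n + 1) * Fintype.card A ^ (n + 1) * exp (-(c * θ⁻¹ ^ n)))) := by
  have hleft := h.bernoulliField_linkMass_half_step_le hp hβ hγ hμ hpμ hθ (hK n le_rfl) hk le_rfl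
    n.le_succ hc hcp hcK
  have hright := h.flip.bernoulliField_linkMass_half_step_le hp hβ hγ hμ hpμ hθ
    (hK (n + 1) n.le_succ) hk n.le_succ le_rfl hc hcp hcK
  simp only [linkMass_flip] at hright
  refine (measure_mono fun ω hω => ?_).trans <| (measure_union_le _ _).trans <|
    (add_le_add hleft hright).trans_eq ?_
  · rw [mem_union, or_iff_not_imp_left]
    intro hnot
    have hsmall : |linkMass σ k p ω (n + 1) n - linkMass σ k p ω n n| < θ ^ n :=
      not_le.1 fun hge => hnot ⟨hω.1.trans (by norm_num), hge⟩
    have htri := abs_sub_le (linkMass σ k p ω (n + 1) (n + 1)) (linkMass σ k p ω (n + 1) n)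
      (linkMass σ k p ω n n)
    have hpow : θ ^ n ≤ 1 := pow_le_one₀ hθ.1.le hθ.2.le
    exact ⟨by linarith [hω.1, (abs_lt.1 hsmall).2], by linarith [hω.2]⟩
  · rw [← ENNReal.ofReal_add (by positivity) (by positivity)]
    ring_nf

end IsLinkKernel

theorem summable_pow_mul_exp_neg_mul_pow {x c y : ℝ} (hx : 0 ≤ x) (hc : 0 < c) (hy : 1 < y) :
    Summable fun n : ℕ => x ^ n * exp (-(c * y ^ n)) := by
  obtain ⟨j, hj⟩ := pow_unbounded_of_one_lt x hy
  have := zero_lt_one.trans hy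
  refine .of_nonneg_of_le (fun n => by positivity) (fun n => ?_)
    ((summable_geometric_of_lt_one (r := x / y ^ j) (by positivity)
      ((div_lt_one (by positivity)).2 hj)).mul_left (j.factorial / c ^ j))
  have hexp := Real.pow_div_factorial_le_exp (c * y ^ n) (by positivity) j
  rw [div_le_iff₀ (by positivity)] at hexp
  rw [exp_neg, div_pow, ← div_eq_mul_inv, div_mul_div_comm, div_le_div_iff₀ (by positivity)
    (by positivity)]
  calc x ^ n * (c ^ j * (y ^ j) ^ n) = x ^ n * (c * y ^ n) ^ j := by ring
    _ ≤ x ^ n * (exp (c * y ^ n) * j.factorial) := by gcongr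
    _ = j.factorial * x ^ n * exp (c * y ^ n) := by ring

theorem abs_sub_one_le_half {y e : ℕ → ℝ} {k : ℕ} (hk : y k = 1) (he : ∀ n, 0 ≤ e n)
    (hsum : Summable e) (htail : ∑' n, e (n + k) ≤ 1 / 2)
    (hstep : ∀ n ≥ k, y n ≤ 3 / 2 → |y (n + 1) - y n| ≤ e n) {n : ℕ} (hn : k ≤ n) :
    |y n - 1| ≤ 1 / 2 := by
  have htail (i : ℕ) : ∑ j ∈ Finset.range i, e (j + k) ≤ 1 / 2 :=
    (((summable_nat_add_iff k).2 hsum).sum_le_tsum _ fun _ _ => he _).trans htail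
  have hpath (i : ℕ) : |y (i + k) - 1| ≤ ∑ j ∈ Finset.range i, e (j + k) := by
    induction i with
    | zero => simp [hk]
    | succ i ih =>
      have hle := hstep (i + k) (by lia) (by linarith [le_abs_self (y (i + k) - 1), htail i])
      rw [Finset.sum_range_succ, Nat.add_right_comm]
      linarith [abs_sub_le (y (i + k + 1)) (y (i + k)) 1]
  obtain ⟨i, rfl⟩ := Nat.exists_eq_add_of_le' hn
  exact (hpath i).trans (htail i)

theorem exists_net_point {t : ℝ} (ht : t ∈ Icc (0 : ℝ) 1) {q : ℕ} (hq : 0 < q) :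
    ∃ j ≤ q, |t - j / q| ≤ (q : ℝ)⁻¹ ∧ (j / q : ℝ) ∈ Icc (0 : ℝ) 1 := by
  have hq' : (0 : ℝ) < q := by exact_mod_cast hq
  have hj := Nat.floor_le (mul_nonneg ht.1 hq'.le)
  have hj' := Nat.lt_floor_add_one (t * q)
  have hle : ⌊t * q⌋₊ ≤ q := Nat.floor_le_of_le (mul_le_of_le_one_left hq'.le ht.2)
  refine ⟨_, hle, ?_, by positivity, (div_le_one hq').2 (by exact_mod_cast hle)⟩
  rw [abs_le, ← one_div, ← neg_div, div_le_iff₀' hq', le_div_iff₀' hq', mul_sub,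
    mul_div_cancel₀ _ hq'.ne']
  constructor <;> linarith

theorem measure_iInter_compl_ne_zero {Ω : Type*} [MeasurableSpace Ω] {P : Measure Ω}
    [IsProbabilityMeasure P] {B : ℕ → Set Ω} {a : ℕ → ℝ} (hB : ∀ n, MeasurableSet (B n))
    (ha : ∀ n, 0 ≤ a n) (hsum : Summable a) (hlt : ∑' n, a n < 1)
    (h : ∀ n, P (B n) ≤ ENNReal.ofReal (a n)) : P (⋂ n, (B n)ᶜ) ≠ 0 := by
  rw [← compl_iUnion, ne_eq, prob_compl_eq_zero_iff (.iUnion hB)]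
  refine ne_of_lt ?_
  calc P (⋃ n, B n) ≤ ∑' n, ENNReal.ofReal (a n) :=
        (measure_iUnion_le B).trans (ENNReal.tsum_le_tsum h)
    _ = ENNReal.ofReal (∑' n, a n) := (ENNReal.ofReal_tsum_of_nonneg ha hsum).symm
    _ < 1 := ENNReal.ofReal_lt_one.2 hlt

theorem exists_linked_of_linkMass_pos {A : Type*} [Finite A] {k n : ℕ} {p : unitInterval}
    {ω : List A → Bool} {σ : List A → List A → ℝ} (hσ : ∀ w w', 0 ≤ σ w w')
    (h : 0 < linkMass σ k p ω n n) : ∃ w w' : List A, w.length = n ∧ w'.length = n ∧ 0 < σ w w' ∧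
      0 < density k p ω w ∧ 0 < density k p ω w' := by
  obtain ⟨w, hw, hpos⟩ := Finset.exists_lt_of_sum_lt (f := fun _ => (0 : ℝ))
    (Finset.sum_const_zero.trans_lt h)
  have hrow := pos_of_mul_pos_right hpos density_nonneg
  obtain ⟨w', hw', hpos'⟩ := Finset.exists_lt_of_sum_lt (f := fun _ => (0 : ℝ))
    (Finset.sum_const_zero.trans_lt hrow)
  exact ⟨w, w', mem_words.1 hw, mem_words.1 hw', pos_of_mul_pos_left hpos' density_nonneg,
    pos_of_mul_pos_left hpos hrow.le, pos_of_mul_pos_right hpos' (hσ w w')⟩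

section Continuum

variable {A : Type*} [Fintype A] {k n : ℕ} {p : unitInterval}
  {ω : List A → Bool}

theorem abs_linkMass_sub_le (hp : (0 : ℝ) < p) {σ τ : List A → List A → ℝ} {ε : ℝ}
    (h : ∀ w w', |σ w w' - τ w w'| ≤ ε) :
    |linkMass σ k p ω n n - linkMass τ k p ω n n| ≤ (Fintype.card A * (p : ℝ)⁻¹) ^ (2 * n) * ε := by
  have hpair {w w' : List A} (hw : w ∈ words A n) (hw' : w' ∈ words A n) :
      |density k p ω w * (σ w w' * density k p ω w') -
        density k p ω w * (τ w w' * density k p ω w')| ≤ (p : ℝ)⁻¹ ^ n * (ε * (p : ℝ)⁻¹ ^ n) := by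
    rw [← mul_sub, ← sub_mul, abs_mul, abs_mul, abs_of_nonneg density_nonneg,
      abs_of_nonneg density_nonneg]
    have := (abs_nonneg _).trans (h w w')
    have hdens {v : List A} (hv : v ∈ words A n) : density k p ω v ≤ (p : ℝ)⁻¹ ^ n :=
      (density_le hp).trans_eq (by rw [mem_words.1 hv])
    gcongr
    · exact mul_nonneg (abs_nonneg _) density_nonneg
    · exact hdens hw
    · exact density_nonneg
    · exact h w w'
    · exact hdens hw'
  simp only [linkMass, rowMass, Finset.mul_sum, ← Finset.sum_sub_distrib]
  calc _ ≤ ∑ _w ∈ words A n, ∑ _w' ∈ words A n, (p : ℝ)⁻¹ ^ n * (ε * (p : ℝ)⁻¹ ^ n) :=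
        (Finset.abs_sum_le_sum_abs _ _).trans <| Finset.sum_le_sum fun _ hw =>
          (Finset.abs_sum_le_sum_abs _ _).trans <| Finset.sum_le_sum fun _ hw' => hpair hw hw'
    _ = (Fintype.card A * (p : ℝ)⁻¹) ^ (2 * n) * ε := by
        simp only [Finset.sum_const, nsmul_eq_mul, card_words]; ring

/-- The event that the link mass of a kernel in the family `σ`, sampled on a net of mesh `R⁻ⁿ`,
jumps by more than `2θⁿ` between the levels `n` and `n + 1` while being at most `2`. -/
def netJump (σ : ℝ → List A → List A → ℝ) (k : ℕ) (p θ : ℝ) (R n : ℕ) : Set (List A → Bool) :=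
  ⋃ j ∈ Finset.range (R ^ n + 1), {ω | linkMass (σ (j / (R ^ n : ℕ))) k p ω n n ≤ 2 ∧
    2 * θ ^ n < |linkMass (σ (j / (R ^ n : ℕ))) k p ω (n + 1) (n + 1) -
      linkMass (σ (j / (R ^ n : ℕ))) k p ω n n|}

/-- The bound for the jump of the link mass of any kernel in an `L`-Lipschitz family when no jump
on the net exceeds `2θⁿ`. -/
def netError (A : Type*) [Fintype A] (p θ L : ℝ) (n : ℕ) : ℝ :=
  2 * θ ^ n + 2 * L * (Fintype.card A * p⁻¹) ^ 2 * 2⁻¹ ^ n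

variable {σ : ℝ → List A → List A → ℝ} {S : Set (List A)} {C β γ μ θ L : ℝ} {R : ℕ}

theorem measurableSet_netJump : MeasurableSet (netJump σ k p θ R n) :=
  Finset.measurableSet_biUnion _ fun _ _ =>
    (measurableSet_le measurable_linkMass measurable_const).inter <|
      measurableSet_lt measurable_const (measurable_linkMass.sub measurable_linkMass).abs

theorem dependsOn_mem_iInter_compl_netJump :
    DependsOn (· ∈ ⋂ n, (netJump σ k p θ R (n + k))ᶜ) {u : List A | u.length ≤ k}ᶜ := by
  refine fun ω η h => ?_
  have hdens (w : List A) : density k p ω w = density k p η w :=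
    density_congr fun u _ hu => h u hu.not_ge
  simp only [mem_iInter, mem_compl_iff, netJump, mem_iUnion, Set.mem_ofPred_eq, linkMass, rowMass,
    hdens]

variable [Nonempty A]

theorem abs_linkMass_succ_sub_le_of_notMem_netJump (hp : (0 : ℝ) < p)
    (hL : ∀ s ∈ Icc (0 : ℝ) 1, ∀ t ∈ Icc (0 : ℝ) 1, ∀ w w', |σ t w w' - σ s w w'| ≤ L * |t - s|)
    (hR : 2 * (Fintype.card A * (p : ℝ)⁻¹) ^ 2 ≤ R) (hω : ω ∉ netJump σ k p θ R n) {t : ℝ}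
    (hθ : 0 ≤ θ) (ht : t ∈ Icc (0 : ℝ) 1) (hlevel : linkMass (σ t) k p ω n n ≤ 3 / 2)
    (hsmall : netError A p θ L n ≤ 1 / 2) :
    |linkMass (σ t) k p ω (n + 1) (n + 1) - linkMass (σ t) k p ω n n| ≤
      netError A p θ L n := by
  unfold netError at *
  set b := (Fintype.card A * (p : ℝ)⁻¹) ^ 2 with hb
  have hb1 : 1 ≤ b := one_le_pow₀ <| one_le_mul_of_one_le_of_one_le
    (Nat.one_le_cast.2 Fintype.card_pos) ((one_le_inv₀ hp).2 p.2.2)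
  have hL0 : 0 ≤ L := by
    simpa using (abs_nonneg _).trans (hL 0 (by simp) 1 (by simp) [] [])
  have hRpos : 0 < R := by exact_mod_cast (by linarith : (0 : ℝ) < R)
  obtain ⟨j, hj, hdist, hmem⟩ := exists_net_point ht (pow_pos hRpos n)
  set s : ℝ := j / (R ^ n : ℕ)
  have hclose (m : ℕ) (hm : m ≤ n + 1) :
      |linkMass (σ t) k p ω m m - linkMass (σ s) k p ω m m| ≤ L * b * 2⁻¹ ^ n := by
    refine (abs_linkMass_sub_le hp (hL s hmem t ht)).trans ?_
    rw [pow_mul, ← hb]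
    calc b ^ m * (L * |t - s|) ≤ b ^ (n + 1) * (L * ((R ^ n : ℕ) : ℝ)⁻¹) := by gcongr
      _ ≤ b ^ (n + 1) * (L * ((2 * b) ^ n)⁻¹) := by
          push_cast; gcongr
      _ = L * b * 2⁻¹ ^ n := by rw [mul_pow, inv_pow]; field_simp; ring
  have hn := abs_le.1 (hclose n n.le_succ)
  have hsucc := abs_le.1 (hclose (n + 1) le_rfl)
  have hjump : |linkMass (σ s) k p ω (n + 1) (n + 1) - linkMass (σ s) k p ω n n| ≤ 2 * θ ^ n := by
    by_contra! hgt
    refine hω (mem_biUnion (Finset.mem_coe.2 (Finset.mem_range.2 (Nat.lt_succ_iff.2 hj))) ⟨?_, hgt⟩)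
    have := pow_nonneg hθ n
    nlinarith
  rw [abs_le] at hjump ⊢
  constructor <;> linarith

variable [DecidableEq A]

theorem linkMass_pos_of_forall_notMem_netJump (hp : (0 : ℝ) < p) (hθ : θ ∈ Ioo (0 : ℝ) 1) {t : ℝ}
    (hσ : IsLinkKernel (σ t) S C β γ)
    (hL : ∀ s ∈ Icc (0 : ℝ) 1, ∀ t ∈ Icc (0 : ℝ) 1, ∀ w w', |σ t w w' - σ s w w'| ≤ L * |t - s|)
    (hR : 2 * (Fintype.card A * (p : ℝ)⁻¹) ^ 2 ≤ R) (hω : ∀ m ≥ k, ω ∉ netJump σ k p θ R m)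
    (htail : ∑' m, netError A p θ L (m + k) ≤ 1 / 2) (ht : t ∈ Icc (0 : ℝ) 1) (hn : k ≤ n) :
    0 < linkMass (σ t) k p ω n n := by
  have hL0 : 0 ≤ L := by
    simpa using (abs_nonneg _).trans (hL 0 (by simp) 1 (by simp) [] [])
  have hnonneg (m : ℕ) : 0 ≤ netError A p θ L m := by
    have := hθ.1; unfold netError; positivity
  have hsum : Summable (netError A p θ L) :=
    ((summable_geometric_of_lt_one hθ.1.le hθ.2).mul_left 2).add
      ((summable_geometric_of_lt_one (by norm_num) (by norm_num)).mul_left _)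
  have hsmall (m : ℕ) (hm : k ≤ m) : netError A p θ L m ≤ 1 / 2 := by
    have := ((summable_nat_add_iff k).2 hsum).le_tsum (m - k) fun _ _ => hnonneg _
    rw [Nat.sub_add_cancel hm] at this
    exact this.trans htail
  have := abs_sub_one_le_half (y := fun n => linkMass (σ t) k p ω n n)
    hσ.linkMass_self_eq_one hnonneg hsum htail (fun m hm hle =>
      abs_linkMass_succ_sub_le_of_notMem_netJump hp hL hR (hω m hm) hθ.1.le ht hle (hsmall m hm)) hn
  linarith [(abs_le.1 this).1]

theorem bernoulliField_netJump_le (hp : (0 : ℝ) < p) (hβ : 0 < β)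
    (hσ : ∀ t ∈ Icc (0 : ℝ) 1, IsLinkKernel (σ t) S C β γ)
    (hγ : 0 < γ) (hμ : γ ≤ μ) (hpμ : (p : ℝ)⁻¹ ≤ μ) (hθ : θ ∈ Ioo (0 : ℝ) 1) {K : ℝ}
    (hK : ∀ m, n ≤ m → (p : ℝ)⁻¹ ^ n * (C * β ^ m * countBound C μ θ m) ≤ K * θ ^ (3 * n))
    (hk : k ≤ n) {c : ℝ} (hc : 0 ≤ c) (hcp : c ≤ 2 * p ^ 2) (hcK : c * (3 * K) ≤ 2 * p ^ 2)
    (hR : 0 < R) :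
    bernoulliField (List A) p (netJump σ k p θ R n) ≤ ENNReal.ofReal
      (16 * Fintype.card A * ((2 * R * Fintype.card A) ^ n * exp (-(c * θ⁻¹ ^ n)))) := by
  set N := (Fintype.card A : ℝ)
  have hpoint : ∀ j ∈ Finset.range (R ^ n + 1), _ := fun j hj =>
    (hσ (j / (R ^ n : ℕ)) ⟨by positivity, div_le_one_of_le₀
      (by exact_mod_cast Nat.lt_succ_iff.1 (Finset.mem_range.1 hj)) (by positivity)⟩)
      |>.bernoulliField_linkMass_step_le hp hβ hγ hμ hpμ hθ hK hk hc hcp hcK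
  refine (measure_biUnion_finset_le _ _).trans ((Finset.sum_le_sum hpoint).trans ?_)
  rw [Finset.sum_const, Finset.card_range, nsmul_eq_mul, ← ENNReal.ofReal_natCast,
    ← ENNReal.ofReal_mul (Nat.cast_nonneg _)]
  refine ENNReal.ofReal_le_ofReal ?_
  have hRn : ((R ^ n + 1 : ℕ) : ℝ) ≤ 2 * R ^ n := by
    have := Nat.one_le_pow n R hR; exact_mod_cast (by lia : R ^ n + 1 ≤ 2 * R ^ n)
  have hn : (n : ℝ) + 1 ≤ 2 ^ n := by exact_mod_cast Nat.lt_two_pow_self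
  calc _ ≤ 2 * (R : ℝ) ^ n * (8 * (2 ^ n * N ^ (n + 1) * exp (-(c * θ⁻¹ ^ n)))) := by gcongr
    _ = 16 * N * ((2 * R * N) ^ n * exp (-(c * θ⁻¹ ^ n))) := by ring

theorem exists_eventually_iInter_compl_netJump_ne_zero (hp : (0 : ℝ) < p) (hβ : 0 < β)
    (hγ : 0 < γ) (hβp : β < p ^ 2) (hβγ : β * γ < p)
    (hσ : ∀ t ∈ Icc (0 : ℝ) 1, IsLinkKernel (σ t) S C β γ) (hR : 0 < R) :
    ∃ θ ∈ Ioo (0 : ℝ) 1, ∀ᶠ k in Filter.atTop,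
      bernoulliField (List A) p (⋂ n, (netJump σ k p θ R (n + k))ᶜ) ≠ 0 := by
  obtain ⟨θ, hθ, K, hK, hcount⟩ : ∃ θ ∈ Ioo (0 : ℝ) 1, ∃ K > 0, ∀ n m, n ≤ m →
      (p : ℝ)⁻¹ ^ n * (C * β ^ m * countBound C (max γ (p : ℝ)⁻¹) θ m) ≤ K * θ ^ (3 * n) := by
    refine exists_mul_countBound_le ((one_le_inv₀ hp).2 p.2.2)
      (zero_lt_one.trans_le (hσ 0 (by simp)).one_le) hβ (lt_max_of_lt_left hγ) ?_
    rw [← div_eq_mul_inv, div_lt_one hp, mul_max_of_nonneg _ _ hβ.le]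
    exact max_lt hβγ (by rwa [← div_eq_mul_inv, div_lt_iff₀ hp, ← sq])
  refine ⟨θ, hθ, ?_⟩
  set c := min (2 * (p : ℝ) ^ 2) (2 * p ^ 2 / (3 * K))
  have hc : 0 < c := by positivity
  set a := fun n : ℕ => 16 * Fintype.card A * ((2 * R * Fintype.card A) ^ n * exp (-(c * θ⁻¹ ^ n)))
  have ha : Summable a := (summable_pow_mul_exp_neg_mul_pow (by positivity) hc
    ((one_lt_inv₀ hθ.1).2 hθ.2)).mul_left _
  filter_upwards [(tendsto_sum_nat_add a).eventually_lt_const one_pos] with k hk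
  exact measure_iInter_compl_ne_zero (fun _ => measurableSet_netJump)
    (fun n => by positivity) ((summable_nat_add_iff k).2 ha) hk fun n =>
      bernoulliField_netJump_le hp hβ hσ hγ (le_max_left _ _) (le_max_right _ _) hθ
        (fun m hm => hcount _ m hm) (by lia) hc.le (min_le_left _ _)
        ((le_div_iff₀ (by positivity)).1 (min_le_right _ _)) hR

/-- All prefixes of `w`, including the empty word, carry the label `true`. -/
def Alive {A : Type*} (ω : List A → Bool) (w : List A) : Prop := ∀ u, u <+: w → ω u = true

theorem exists_measurableSet_forall_linked (hp : (0 : ℝ) < p) (hβ : 0 < β) (hγ : 0 < γ)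
    (hβp : β < p ^ 2) (hβγ : β * γ < p) (hσ : ∀ t ∈ Icc (0 : ℝ) 1, IsLinkKernel (σ t) S C β γ)
    (hL : ∀ s ∈ Icc (0 : ℝ) 1, ∀ t ∈ Icc (0 : ℝ) 1, ∀ w w', |σ t w w' - σ s w w'| ≤ L * |t - s|) :
    ∃ G, MeasurableSet G ∧ bernoulliField (List A) p G ≠ 0 ∧ ∃ k, ∀ ω ∈ G, ∀ n ≥ k,
      ∀ t ∈ Icc (0 : ℝ) 1, ∃ w w' : List A, w.length = n ∧ w'.length = n ∧ 0 < σ t w w' ∧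
        Alive ω w ∧ Alive ω w' := by
  obtain ⟨R, hR⟩ := exists_nat_ge (2 * (Fintype.card A * (p : ℝ)⁻¹) ^ 2)
  have hRpos : 0 < R := Nat.cast_pos.1 (lt_of_lt_of_le (by positivity) hR)
  obtain ⟨θ, hθ, hpos⟩ :=
    exists_eventually_iInter_compl_netJump_ne_zero hp hβ hγ hβp hβγ hσ hRpos
  obtain ⟨k, hpos, htail⟩ := (hpos.and ((tendsto_sum_nat_add (netError A p θ L)).eventually_le_const
    one_half_pos)).exists
  set G := ⋂ n, (netJump σ k p θ R (n + k))ᶜ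
  have hG : MeasurableSet G := .iInter fun n => measurableSet_netJump.compl
  let T : Finset (List A) := (Finset.range (k + 1)).biUnion (words A)
  have hT (u : List A) : u ∈ T ↔ u.length ≤ k := by simp [T]
  refine ⟨G ∩ {ω | ∀ w ∈ T, ω w = true}, hG.inter (by measurability),
    ?_, k, fun ω hω n hn t ht => ?_⟩
  · rw [bernoulliField_inter_forall_mem_eq_true hG
      (dependsOn_mem_iInter_compl_netJump.mono fun u => by simp [hT])]
    exact mul_ne_zero hpos (pow_ne_zero _ (by simpa using hp))
  obtain ⟨w, w', hw, hw', hlink, hdw, hdw'⟩ := exists_linked_of_linkMass_pos (hσ t ht).nonneg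
    (linkMass_pos_of_forall_notMem_netJump hp hθ (hσ t ht) hL hR
      (fun m hm => by simpa [Nat.sub_add_cancel hm] using mem_iInter.1 hω.1 (m - k)) htail ht hn)
  have halive {v : List A} (hv : 0 < density k p ω v) : Alive ω v := fun u hu =>
    (le_or_gt u.length k).elim (fun h => hω.2 u ((hT u).2 h)) (eq_true_of_density_pos hv hu)
  exact ⟨w, w', hw, hw', hlink, halive hdw, halive hdw'⟩

end Continuum

section Cells

variable {d M : ℕ}

/-- The `i`-th coordinate of the lower-left corner of the cube indexed by `w`, in units of the side
length. -/
def corner (w : List (Alpha d M)) (i : Fin d) : ℕ :=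
  Nat.ofDigits M (w.map fun c => (c i : ℕ)).reverse

theorem corner_concat (w : List (Alpha d M)) (c : Alpha d M) (i : Fin d) :
    corner (w ++ [c]) i = c i + M * corner w i := by
  simp [corner, Nat.ofDigits_cons]

theorem corner_cons (c : Alpha d M) (w : List (Alpha d M)) (i : Fin d) :
    corner (c :: w) i = corner w i + M ^ w.length * c i := by
  simp [corner, Nat.ofDigits_append]

theorem corner_succ {e : ℕ} (w : List (Alpha (e + 1) M)) (i : Fin e) :
    corner w i.succ = corner (w.map Fin.tail) i := by
  simp only [corner, List.map_map]; rfl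

theorem eq_of_corner_eq (hM : 1 < M) {w w' : List (Alpha d M)} (hlen : w.length = w'.length)
    (h : ∀ i, corner w i = corner w' i) : w = w' := by
  have hmap (i : Fin d) : (w.map fun c => (c i : ℕ)) = w'.map fun c => (c i : ℕ) :=
    List.reverse_injective <| Nat.ofDigits_inj_of_len_eq hM (by simpa using hlen) (by simp)
      (by simp) (h i)
  refine List.ext_getElem hlen fun j hj hj' => funext fun i => Fin.ext ?_
  have := List.getElem_of_eq (hmap i) (i := j) (by simpa using hj)
  rwa [List.getElem_map, List.getElem_map] at this

/-- The half-open version of `wordCube`, as a subset of `Fin d → ℝ`: the cells of the words of a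
given length partition `[0,1)^d`. -/
def cell (w : List (Alpha d M)) : Set (Fin d → ℝ) :=
  univ.pi fun i => Ico (wordBase d M w i) (wordBase d M w i + ((M : ℝ) ^ w.length)⁻¹)

theorem measurableSet_cell (w : List (Alpha d M)) : MeasurableSet (cell w) :=
  .univ_pi fun _ => measurableSet_Ico

theorem toLp_mem_wordCube {w : List (Alpha d M)} {y : Fin d → ℝ} (h : y ∈ cell w) :
    WithLp.toLp 2 y ∈ wordCube d M w := fun i => by
  simpa using ⟨(h i trivial).1, (h i trivial).2.le⟩

theorem wordBase_nil (i : Fin d) : wordBase d M [] i = 0 :=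
  Fin.sum_univ_zero _

variable [NeZero M]

theorem wordBase_cons (c : Alpha d M) (w : List (Alpha d M)) (i : Fin d) :
    wordBase d M (c :: w) i = (c i + wordBase d M w i) / M := by
  have hM : (M : ℝ) ≠ 0 := NeZero.ne _
  have hsplit : wordBase d M (c :: w) i = c i * (M : ℝ) ^ (-((0 : ℕ) : ℤ) - 1) +
      ∑ j : Fin w.length, (w.get j i : ℝ) * (M : ℝ) ^ (-((j + 1 : ℕ) : ℤ) - 1) :=
    Fin.sum_univ_succ _
  have hshift (j : ℕ) : (M : ℝ) ^ (-((j + 1 : ℕ) : ℤ) - 1) = M ^ (-(j : ℤ) - 1) / M := by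
    rw [div_eq_mul_inv, ← zpow_sub_one₀ hM]; congr 1; push_cast; ring
  rw [hsplit, add_div, wordBase, Finset.sum_div]
  simp only [hshift, mul_div_assoc]
  simp [div_eq_mul_inv]

theorem wordBase_eq_corner_div (w : List (Alpha d M)) (i : Fin d) :
    wordBase d M w i = corner w i / (M : ℝ) ^ w.length := by
  have hM : (M : ℝ) ≠ 0 := NeZero.ne _
  induction w with
  | nil => simp [wordBase_nil, corner]
  | cons c w ih =>
    rw [wordBase_cons, ih, corner_cons, List.length_cons]
    push_cast
    field_simp
    ring

theorem mem_cell {w : List (Alpha d M)} {y : Fin d → ℝ} :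
    y ∈ cell w ↔ ∀ i, corner w i ≤ (M : ℝ) ^ w.length * y i ∧
      (M : ℝ) ^ w.length * y i < corner w i + 1 := by
  have hM : (0 : ℝ) < M := Nat.cast_pos.2 (NeZero.pos M)
  simp only [cell, mem_univ_pi, mem_Ico, wordBase_eq_corner_div]
  refine forall_congr' fun i => and_congr (div_le_iff₀' (by positivity)) ?_
  rw [← one_div, ← add_div, lt_div_iff₀' (by positivity)]

theorem mem_cell_iff_floor {w : List (Alpha d M)} {y : Fin d → ℝ} :
    y ∈ cell w ↔ ∀ i, ⌊(M : ℝ) ^ w.length * y i⌋ = corner w i := by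
  simp only [mem_cell, Int.floor_eq_iff, Int.cast_natCast]

theorem mem_cell_concat {w : List (Alpha d M)} {c : Alpha d M} {y : Fin d → ℝ} :
    y ∈ cell (w ++ [c]) ↔
      y ∈ cell w ∧ ∀ i, ⌊(M : ℝ) ^ (w.length + 1) * y i⌋ % M = c i := by
  have hM : (0 : ℤ) < M := by exact_mod_cast NeZero.pos M
  have hdiv (i : Fin d) :
      ⌊(M : ℝ) ^ w.length * y i⌋ = ⌊(M : ℝ) ^ (w.length + 1) * y i⌋ / M := by
    rw [pow_succ', mul_assoc, Int.natCast_mul_floor_div_cancel (NeZero.ne M)]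
  simp only [mem_cell_iff_floor, List.length_append, List.length_singleton, corner_concat, hdiv,
    ← forall_and]
  refine forall_congr' fun i => ?_
  rw [Int.ediv_emod_unique hM]
  have := (c i).2
  push_cast
  lia

theorem iUnion_cell_concat (w : List (Alpha d M)) : ⋃ c, cell (w ++ [c]) = cell w := by
  ext y
  simp only [mem_iUnion, mem_cell_concat, exists_and_left, and_iff_left_iff_imp]
  have hM : (0 : ℤ) < M := by exact_mod_cast NeZero.pos M
  refine fun _ => ⟨fun i => ⟨(⌊(M : ℝ) ^ (w.length + 1) * y i⌋ % M).toNat, ?_⟩, fun i => ?_⟩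
  · have := Int.emod_lt_of_pos ⌊(M : ℝ) ^ (w.length + 1) * y i⌋ hM; lia
  · exact (Int.toNat_of_nonneg (Int.emod_nonneg _ hM.ne')).symm

theorem pairwise_disjoint_cell_concat (w : List (Alpha d M)) :
    Pairwise (Function.onFun Disjoint fun c => cell (w ++ [c])) := fun c c' hne =>
  Set.disjoint_left.2 fun y hy hy' => hne <| funext fun i => Fin.ext <| by
    exact_mod_cast ((mem_cell_concat.1 hy).2 i).symm.trans ((mem_cell_concat.1 hy').2 i)

theorem abs_sub_le_of_mem_cell {w w' : List (Alpha d M)} {y y' : Fin d → ℝ} (h : y ∈ cell w)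
    (h' : y' ∈ cell w') (hlen : w.length = w'.length) {i : Fin d} (hi : corner w i = corner w' i) :
    |y i - y' i| ≤ ((M : ℝ) ^ w.length)⁻¹ := by
  have hpos : (0 : ℝ) < (M : ℝ) ^ w.length := pow_pos (Nat.cast_pos.2 (NeZero.pos M)) _
  have h := mem_cell.1 h i
  have h' := mem_cell.1 h' i
  rw [← hlen, ← hi] at h'
  have hle : |(M : ℝ) ^ w.length * (y i - y' i)| ≤ 1 := by
    rw [mul_sub, abs_le]; constructor <;> linarith
  rwa [abs_mul, abs_of_pos hpos, ← le_div_iff₀' hpos, one_div] at hle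

theorem corner_lt_add_four {w w' : List (Alpha d M)} {y y' : Fin d → ℝ} (h : y ∈ cell w)
    (h' : y' ∈ cell w') (hlen : w.length = w'.length) {i : Fin d}
    (hi : |y i - y' i| ≤ 2 * ((M : ℝ) ^ w.length)⁻¹) : corner w i < corner w' i + 4 := by
  have hpos : (0 : ℝ) < (M : ℝ) ^ w.length := pow_pos (Nat.cast_pos.2 (NeZero.pos M)) _
  have h := (mem_cell.1 h i).1
  have h' := (mem_cell.1 h' i).2
  rw [← hlen] at h'
  have hdiff := (le_abs_self _).trans hi
  rw [← div_eq_mul_inv, le_div_iff₀' hpos, mul_sub] at hdiff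
  exact_mod_cast (by linarith : (corner w i : ℝ) < corner w' i + 4)

end Cells

theorem card_filter_prefix_le {e M n : ℕ} (hM : 1 < M) (v : List (Alpha (e + 1) M))
    {F : Finset (List (Alpha (e + 1) M))} (hF : F ⊆ words _ n)
    (h : ∀ w ∈ F, ∀ w' ∈ F, (∀ i : Fin e, corner w i.succ = corner w' i.succ) →
      corner w 0 < corner w' 0 + 4) :
    ((F.filter (v <+: ·)).card : ℝ) ≤ 4 * ((M : ℝ) ^ e) ^ (n - v.length) := by
  -- The first coordinates lie among four consecutive integers, so they are determined mod 4.
  have hle : (F.filter (v <+: ·)).card ≤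
      (Finset.range 4 ×ˢ words (Alpha e M) (n - v.length)).card := by
    refine Finset.card_le_card_of_injOn
      (fun w => (corner w 0 % 4, (w.drop v.length).map Fin.tail)) (fun w hw => ?_) ?_
    · have := mem_words.1 (hF (Finset.mem_filter.1 hw).1)
      simp [this, Nat.mod_lt]
    · intro w hw w' hw' heq
      obtain ⟨hwF, s, rfl⟩ := Finset.mem_filter.1 hw
      obtain ⟨hwF', s', rfl⟩ := Finset.mem_filter.1 hw'
      have htail := congrArg Prod.snd heq
      have hsucc (i : Fin e) : corner (v ++ s) i.succ = corner (v ++ s') i.succ := by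
        rw [corner_succ, corner_succ, List.map_append, List.map_append]
        simpa using congrArg (fun l => corner (v.map Fin.tail ++ l) i) htail
      refine eq_of_corner_eq hM ((mem_words.1 (hF hwF)).trans (mem_words.1 (hF hwF')).symm)
        (Fin.cases ?_ hsucc)
      have : corner (v ++ s) 0 % 4 = corner (v ++ s') 0 % 4 := congrArg Prod.fst heq
      have := h _ hwF _ hwF' hsucc
      have := h _ hwF' _ hwF fun i => (hsucc i).symm
      lia
  calc ((F.filter (v <+: ·)).card : ℝ)
    _ ≤ (Finset.range 4 ×ˢ words (Alpha e M) (n - v.length)).card := by exact_mod_cast hle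
    _ = 4 * ((M : ℝ) ^ e) ^ (n - v.length) := by simp [card_words]

section CellKernel

variable {Z : Type*} [MeasurableSpace Z] {d M : ℕ}

/-- The probability that two random points `y` and `x` lie in the cells of two given words. -/
def cellKernel (τ : Measure Z) (y x : Z → Fin d → ℝ) (w w' : List (Alpha d M)) : ℝ :=
  τ.real (y ⁻¹' cell w ∩ x ⁻¹' cell w')

variable {τ : Measure Z} {y x : Z → Fin d → ℝ}

theorem exists_mem_of_cellKernel_pos {B : Set Z} (hB : ∀ᵐ z ∂τ, z ∈ B) {w w' : List (Alpha d M)}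
    (h : 0 < cellKernel τ y x w w') : ∃ z ∈ B, y z ∈ cell w ∧ x z ∈ cell w' := by
  have hpos : τ (y ⁻¹' cell w ∩ x ⁻¹' cell w') ≠ 0 := fun h0 =>
    h.ne' (by simp [cellKernel, measureReal_def, h0])
  obtain ⟨z, hz, hzB⟩ := ((frequently_ae_mem_iff.2 hpos).and_eventually hB).exists
  exact ⟨z, hzB, hz⟩

theorem sum_cellKernel_concat_left [NeZero M] [IsFiniteMeasure τ] (hy : Measurable y)
    (hx : Measurable x) (w w' : List (Alpha d M)) :
    ∑ c, cellKernel τ y x (w ++ [c]) w' = cellKernel τ y x w w' := by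
  simp only [cellKernel]
  rw [← iUnion_cell_concat w, preimage_iUnion, iUnion_inter, measureReal_iUnion_fintype]
  · exact fun c c' hne =>
      ((pairwise_disjoint_cell_concat w hne).preimage y).mono inf_le_left inf_le_left
  · exact fun c => (hy (measurableSet_cell _)).inter (hx (measurableSet_cell _))

theorem sum_cellKernel_concat_right [NeZero M] [IsFiniteMeasure τ] (hy : Measurable y)
    (hx : Measurable x) (w w' : List (Alpha d M)) :
    ∑ c, cellKernel τ y x w (w' ++ [c]) = cellKernel τ y x w w' := by
  simpa only [cellKernel, inter_comm] using sum_cellKernel_concat_left hx hy w' w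

end CellKernel

/-! ### Pairs of points at a prescribed distance -/

theorem abs_sqrt_sub_sqrt_le {a b c : ℝ} (hc : 0 < c) (ha : c ^ 2 ≤ a) (hb : c ^ 2 ≤ b) :
    |√a - √b| ≤ |a - b| / (2 * c) := by
  have ha' : c ≤ √a := le_sqrt_of_sq_le ha
  have hb' : c ≤ √b := le_sqrt_of_sq_le hb
  have hmul : |a - b| = |√a - √b| * (√a + √b) := by
    rw [← abs_of_pos (by linarith : 0 < √a + √b), ← abs_mul]
    congr 1
    linear_combination -(sq_sqrt ((sq_nonneg c).trans ha)) + sq_sqrt ((sq_nonneg c).trans hb)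
  rw [le_div_iff₀ (by linarith), hmul]
  gcongr
  linarith

section Config

variable {e : ℕ}

/-- The side of the boxes in which the free coordinates range, so small that the last `e`
coordinates contribute little to the distance. -/
def side (e : ℕ) : ℝ := (8 * (e + 1))⁻¹

theorem side_pos (e : ℕ) : 0 < side e := by unfold side; positivity

theorem natCast_mul_side_add (e : ℕ) : e * side e + side e = 1 / 8 := by
  unfold side; field_simp

theorem side_le (e : ℕ) : side e ≤ 1 / 8 := by
  nlinarith [natCast_mul_side_add e, mul_nonneg e.cast_nonneg (side_pos e).le]

theorem natCast_mul_side_le (e : ℕ) : e * side e ≤ 1 / 8 := by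
  linarith [natCast_mul_side_add e, side_pos e]

/-- The distance realised at time `t ∈ [0,1]`. -/
def targetDist (t : ℝ) : ℝ := 5 / 8 + t / 8

/-- The squared distance between the last `e` coordinates of two points. -/
def transverseSq (v : (Fin e → ℝ) × (Fin e → ℝ)) : ℝ := ∑ i, (v.2 i - v.1 i) ^ 2

/-- The first-coordinate displacement that puts two points with last coordinates `v` at distance
`targetDist t`. -/
def offset (t : ℝ) (v : (Fin e → ℝ) × (Fin e → ℝ)) : ℝ := √(targetDist t ^ 2 - transverseSq v)

/-- The first point `(a, u)` of the pair with parameters `(a, u, v)`. -/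
def leftPoint (z : ℝ × (Fin e → ℝ) × (Fin e → ℝ)) : Fin (e + 1) → ℝ := Fin.cons z.1 z.2.1

/-- The second point of the pair with parameters `(a, u, v)`: it has last coordinates `v` and lies
at distance `targetDist t` from `leftPoint (a, u, v)`. -/
def rightPoint (t : ℝ) (z : ℝ × (Fin e → ℝ) × (Fin e → ℝ)) : Fin (e + 1) → ℝ :=
  Fin.cons (z.1 + offset t z.2) z.2.2

/-- The parameters for the last `e` coordinates of a pair. -/
def transverseBox (e : ℕ) : Set ((Fin e → ℝ) × (Fin e → ℝ)) :=
  (univ.pi fun _ => Ico 0 (side e)) ×ˢ (univ.pi fun _ => Ico 0 (side e))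

/-- The parameters `(a, u, v)` of a pair of points. -/
def configBox (e : ℕ) : Set (ℝ × (Fin e → ℝ) × (Fin e → ℝ)) := Ico 0 (side e) ×ˢ transverseBox e

theorem mem_transverseBox {v : (Fin e → ℝ) × (Fin e → ℝ)} : v ∈ transverseBox e ↔
    (∀ i, v.1 i ∈ Ico 0 (side e)) ∧ ∀ i, v.2 i ∈ Ico 0 (side e) := by
  simp only [transverseBox, mem_prod, mem_univ_pi]

theorem transverseSq_nonneg (v : (Fin e → ℝ) × (Fin e → ℝ)) : 0 ≤ transverseSq v :=
  Finset.sum_nonneg fun _ _ => sq_nonneg _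

theorem abs_transverseSq_sub_le {v v' : (Fin e → ℝ) × (Fin e → ℝ)} (hv : v ∈ transverseBox e)
    (hv' : v' ∈ transverseBox e) {η : ℝ} (h₁ : ∀ i, |v.1 i - v'.1 i| ≤ η)
    (h₂ : ∀ i, |v.2 i - v'.2 i| ≤ η) (hη : 0 ≤ η) :
    |transverseSq v - transverseSq v'| ≤ η / 2 := by
  rw [mem_transverseBox] at hv hv'
  have hterm (i : Fin e) :
      |(v.2 i - v.1 i) ^ 2 - (v'.2 i - v'.1 i) ^ 2| ≤ 2 * η * (2 * side e) := by
    have hfactor : (v.2 i - v.1 i) ^ 2 - (v'.2 i - v'.1 i) ^ 2 =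
        ((v.2 i - v'.2 i) - (v.1 i - v'.1 i)) *
          ((v.2 i - v'.1 i) - (v.1 i - v'.2 i)) := by ring
    have h₁ := abs_le.1 (h₁ i)
    have h₂ := abs_le.1 (h₂ i)
    have := hv.1 i
    have := hv.2 i
    have := hv'.1 i
    have := hv'.2 i
    simp only [mem_Ico] at *
    rw [hfactor, abs_mul]
    gcongr <;> rw [abs_le] <;> constructor <;> linarith
  calc |transverseSq v - transverseSq v'|
    _ ≤ ∑ i, |(v.2 i - v.1 i) ^ 2 - (v'.2 i - v'.1 i) ^ 2| := by
      simp only [transverseSq, ← Finset.sum_sub_distrib]; exact Finset.abs_sum_le_sum_abs _ _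
    _ ≤ ∑ _i : Fin e, 2 * η * (2 * side e) := Finset.sum_le_sum fun i _ => hterm i
    _ = 4 * η * (e * side e) := by
      rw [Finset.sum_const, Finset.card_univ, Fintype.card_fin, nsmul_eq_mul]; ring
    _ ≤ η / 2 := by nlinarith [natCast_mul_side_le e]

theorem transverseSq_le {v : (Fin e → ℝ) × (Fin e → ℝ)} (hv : v ∈ transverseBox e) :
    transverseSq v ≤ 1 / 16 := by
  have hr := side_pos e
  have hv' := mem_transverseBox.1 hv
  have hle := abs_transverseSq_sub_le hv (v' := 0)
    (by simp [mem_transverseBox, hr]) (η := side e)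
    (fun i => by simpa [abs_of_nonneg (hv'.1 i).1] using (hv'.1 i).2.le)
    (fun i => by simpa [abs_of_nonneg (hv'.2 i).1] using (hv'.2 i).2.le) hr.le
  have hzero : transverseSq (0 : (Fin e → ℝ) × (Fin e → ℝ)) = 0 := by simp [transverseSq]
  rw [hzero, sub_zero, abs_of_nonneg (transverseSq_nonneg v)] at hle
  linarith [side_le e]

variable {t s : ℝ} {v v' : (Fin e → ℝ) × (Fin e → ℝ)}

theorem quarter_le_radicand (ht : 0 ≤ t) (hv : v ∈ transverseBox e) :
    (1 / 2) ^ 2 ≤ targetDist t ^ 2 - transverseSq v := by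
  have := transverseSq_le hv
  unfold targetDist
  nlinarith

theorem offset_sq (ht : 0 ≤ t) (hv : v ∈ transverseBox e) :
    offset t v ^ 2 = targetDist t ^ 2 - transverseSq v :=
  sq_sqrt ((sq_nonneg _).trans (quarter_le_radicand ht hv))

theorem half_le_offset (ht : 0 ≤ t) (hv : v ∈ transverseBox e) : 1 / 2 ≤ offset t v :=
  le_sqrt_of_sq_le (quarter_le_radicand ht hv)

theorem offset_le (ht : t ∈ Icc (0 : ℝ) 1) (v : (Fin e → ℝ) × (Fin e → ℝ)) :
    offset t v ≤ 3 / 4 := by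
  refine sqrt_le_iff.2 ⟨by norm_num, ?_⟩
  have := transverseSq_nonneg v
  have := ht.1
  have := ht.2
  unfold targetDist
  nlinarith

theorem abs_offset_sub_offset_le_abs_sub (ht : t ∈ Icc (0 : ℝ) 1) (hs : s ∈ Icc (0 : ℝ) 1)
    (hv : v ∈ transverseBox e) : |offset t v - offset s v| ≤ |t - s| := by
  refine (abs_sqrt_sub_sqrt_le one_half_pos (quarter_le_radicand ht.1 hv)
    (quarter_le_radicand hs.1 hv)).trans ?_
  have hfactor : targetDist t ^ 2 - transverseSq v - (targetDist s ^ 2 - transverseSq v) =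
      (t - s) * ((10 + t + s) / 64) := by unfold targetDist; ring
  have := ht.1
  have := hs.1
  rw [hfactor, abs_mul, abs_of_pos (by positivity : 0 < (10 + t + s) / 64)]
  nlinarith [abs_nonneg (t - s), ht.2, hs.2]

theorem abs_offset_sub_offset_le (ht : 0 ≤ t) (hv : v ∈ transverseBox e)
    (hv' : v' ∈ transverseBox e) {η : ℝ} (h₁ : ∀ i, |v.1 i - v'.1 i| ≤ η)
    (h₂ : ∀ i, |v.2 i - v'.2 i| ≤ η) (hη : 0 ≤ η) : |offset t v - offset t v'| ≤ η := by
  refine (abs_sqrt_sub_sqrt_le one_half_pos (quarter_le_radicand ht hv)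
    (quarter_le_radicand ht hv')).trans ?_
  rw [_root_.sub_sub_sub_cancel_left, abs_sub_comm]
  linarith [abs_transverseSq_sub_le hv hv' h₁ h₂ hη]

theorem dist_rightPoint_leftPoint (ht : 0 ≤ t) {z : ℝ × (Fin e → ℝ) × (Fin e → ℝ)}
    (hz : z.2 ∈ transverseBox e) :
    dist (WithLp.toLp 2 (rightPoint t z)) (WithLp.toLp 2 (leftPoint z)) = targetDist t := by
  have hsq : (z.1 + offset t z.2 - z.1) ^ 2 + ∑ i, (z.2.2 i - z.2.1 i) ^ 2 = targetDist t ^ 2 := by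
    rw [add_sub_cancel_left, offset_sq ht hz, transverseSq, sub_add_cancel]
  rw [EuclideanSpace.dist_eq, Fin.sum_univ_succ]
  simp only [rightPoint, leftPoint, Fin.cons_zero, Fin.cons_succ, Real.dist_eq, sq_abs]
  rw [hsq, sqrt_sq]
  unfold targetDist
  positivity

theorem measurable_leftPoint : Measurable (leftPoint (e := e)) :=
  measurable_pi_iff.2 <| Fin.cases measurable_fst fun i =>
    (measurable_pi_apply i).comp (measurable_fst.comp measurable_snd)

theorem measurable_rightPoint (t : ℝ) : Measurable (rightPoint (e := e) t) := by
  have hoffset : Measurable (offset (e := e) t) := by unfold offset transverseSq; fun_prop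
  exact measurable_pi_iff.2 <| Fin.cases (measurable_fst.add (hoffset.comp measurable_snd))
    fun i => (measurable_pi_apply i).comp (measurable_snd.comp measurable_snd)

/-- The uniform distribution on `[0, side e)`. -/
def sideMeasure (e : ℕ) : Measure ℝ := volume[|Ico 0 (side e)]

/-- The uniform distribution on `transverseBox e`. -/
def transverseMeasure (e : ℕ) : Measure ((Fin e → ℝ) × (Fin e → ℝ)) :=
  (Measure.pi fun _ => sideMeasure e).prod (Measure.pi fun _ => sideMeasure e)

/-- The uniform distribution on `configBox e`. -/
def configMeasure (e : ℕ) : Measure (ℝ × (Fin e → ℝ) × (Fin e → ℝ)) :=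
  (sideMeasure e).prod (transverseMeasure e)

instance : IsProbabilityMeasure (sideMeasure e) :=
  cond_isProbabilityMeasure_of_finite (by simp [side_pos e]) (by simp)

instance : IsProbabilityMeasure (transverseMeasure e) := by
  unfold transverseMeasure; infer_instance

instance : IsProbabilityMeasure (configMeasure e) := by unfold configMeasure; infer_instance

theorem sideMeasure_Ico_le (a b : ℝ) :
    sideMeasure e (Ico a b) ≤ ENNReal.ofReal ((side e)⁻¹ * (b - a)) := by
  rw [sideMeasure, cond_apply measurableSet_Ico, Real.volume_Ico, sub_zero,
    ENNReal.ofReal_mul (inv_nonneg.2 (side_pos e).le), ENNReal.ofReal_inv_of_pos (side_pos e)]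
  gcongr
  exact (measure_mono inter_subset_right).trans_eq Real.volume_Ico

theorem sideMeasure_Ico_side : sideMeasure e (Ico 0 (side e)) = 1 :=
  cond_apply_self (by simp [side_pos e]) (by simp)

theorem ae_mem_transverseBox : ∀ᵐ v ∂transverseMeasure e, v ∈ transverseBox e := by
  have hmeas : MeasurableSet (transverseBox e) :=
    (MeasurableSet.univ_pi fun _ => measurableSet_Ico).prod
      (MeasurableSet.univ_pi fun _ => measurableSet_Ico)
  refine (mem_ae_iff_prob_eq_one hmeas).2 ?_
  simp [transverseMeasure, transverseBox, Measure.prod_prod, Measure.pi_pi, sideMeasure_Ico_side]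

theorem ae_mem_configBox : ∀ᵐ z ∂configMeasure e, z ∈ configBox e := by
  have hside : ∀ᵐ a ∂sideMeasure e, a ∈ Ico 0 (side e) :=
    (mem_ae_iff_prob_eq_one measurableSet_Ico).2 sideMeasure_Ico_side
  exact (Measure.quasiMeasurePreserving_fst.ae hside).and
    (Measure.quasiMeasurePreserving_snd.ae ae_mem_transverseBox)

end Config

section DistanceKernel

variable {e M : ℕ} {t : ℝ}

/-- The kernel of the pair of points at distance `targetDist t` with uniform parameters. -/
def distanceKernel (e M : ℕ) (t : ℝ) (w w' : List (Alpha (e + 1) M)) : ℝ :=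
  cellKernel (configMeasure e) leftPoint (rightPoint t) w w'

theorem exists_mem_configBox_of_distanceKernel_pos {w w' : List (Alpha (e + 1) M)}
    (h : 0 < distanceKernel e M t w w') :
    ∃ z ∈ configBox e, leftPoint z ∈ cell w ∧ rightPoint t z ∈ cell w' :=
  exists_mem_of_cellKernel_pos ae_mem_configBox h

theorem distanceKernel_le {w w' : List (Alpha (e + 1) M)} (hlen : w.length = w'.length) :
    distanceKernel e M t w w' ≤
      (side e)⁻¹ ^ (2 * e + 1) * ((M : ℝ) ^ (2 * e + 1))⁻¹ ^ w.length := by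
  have hr := side_pos e
  set η : ℝ := ((M : ℝ) ^ w.length)⁻¹ with hη
  let I (u : List (Alpha (e + 1) M)) (i : Fin (e + 1)) : Set ℝ :=
    Ico (wordBase _ M u i) (wordBase _ M u i + η)
  have hI (u : List (Alpha (e + 1) M)) (i : Fin (e + 1)) :
      sideMeasure e (I u i) ≤ ENNReal.ofReal ((side e)⁻¹ * η) := by
    simpa using sideMeasure_Ico_le (e := e) (wordBase _ M u i) (wordBase _ M u i + η)
  have hsub : leftPoint ⁻¹' cell w ∩ rightPoint t ⁻¹' cell w' ⊆
      I w 0 ×ˢ ((univ.pi fun i => I w i.succ) ×ˢ (univ.pi fun i => I w' i.succ)) := by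
    rintro z ⟨hl, hr⟩
    simp only [mem_preimage, cell, ← hlen] at hl hr
    exact ⟨hl 0 trivial, fun i _ => hl i.succ trivial, fun i _ => hr i.succ trivial⟩
  have hle : configMeasure e (leftPoint ⁻¹' cell w ∩ rightPoint t ⁻¹' cell w') ≤
      ENNReal.ofReal (((side e)⁻¹ * η) ^ (2 * e + 1)) :=
    calc configMeasure e (leftPoint ⁻¹' cell w ∩ rightPoint t ⁻¹' cell w')
      _ ≤ _ := measure_mono hsub
      _ = sideMeasure e (I w 0) *
          ((∏ i : Fin e, sideMeasure e (I w i.succ)) *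
            ∏ i : Fin e, sideMeasure e (I w' i.succ)) := by
        rw [configMeasure, transverseMeasure, Measure.prod_prod, Measure.prod_prod, Measure.pi_pi,
          Measure.pi_pi]
      _ ≤ ENNReal.ofReal ((side e)⁻¹ * η) * ((∏ _i : Fin e, ENNReal.ofReal ((side e)⁻¹ * η)) *
          ∏ _i : Fin e, ENNReal.ofReal ((side e)⁻¹ * η)) := by
        gcongr <;> exact hI _ _
      _ = ENNReal.ofReal (((side e)⁻¹ * η) ^ (2 * e + 1)) := by
        rw [Finset.prod_const, Finset.card_univ, Fintype.card_fin,
          ENNReal.ofReal_pow (by positivity)]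
        ring
  calc distanceKernel e M t w w'
    _ ≤ ((side e)⁻¹ * η) ^ (2 * e + 1) := ENNReal.toReal_le_of_le_ofReal (by positivity) hle
    _ = (side e)⁻¹ ^ (2 * e + 1) * ((M : ℝ) ^ (2 * e + 1))⁻¹ ^ w.length := by
      rw [mul_pow, hη, inv_pow (_ ^ _), inv_pow (_ ^ _), ← pow_mul, ← pow_mul, mul_comm w.length]

theorem wordBase_lt_side_of_distanceKernel_pos {w w' : List (Alpha (e + 1) M)}
    (h : 0 < distanceKernel e M t w w') : wordBase (e + 1) M w 0 < side e := by
  obtain ⟨z, hz, hl, -⟩ := exists_mem_configBox_of_distanceKernel_pos h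
  exact (hl 0 trivial).1.trans_lt hz.1.2

variable [NeZero M]

theorem distanceKernel_nil_nil (ht : t ∈ Icc (0 : ℝ) 1) : distanceKernel e M t [] [] = 1 := by
  have hmem : ∀ z ∈ configBox e, leftPoint z ∈ cell ([] : List (Alpha (e + 1) M)) ∧
      rightPoint t z ∈ cell ([] : List (Alpha (e + 1) M)) := by
    intro z ⟨ha, hv⟩
    have hcoord {a : ℝ} (ha : a ∈ Ico 0 (side e)) : 0 ≤ a ∧ a < 1 :=
      ⟨ha.1, ha.2.trans_le ((side_le e).trans (by norm_num))⟩
    have hv' := mem_transverseBox.1 hv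
    have hr := side_le e
    have hlow := half_le_offset ht.1 hv
    have hupp := offset_le ht z.2
    simp only [mem_cell, corner, List.map_nil, List.reverse_nil, Nat.ofDigits_nil, Nat.cast_zero,
      List.length_nil, pow_zero, one_mul, zero_add]
    refine ⟨Fin.cases (hcoord ha) fun i => hcoord (hv'.1 i),
      Fin.cases ?_ fun i => hcoord (hv'.2 i)⟩
    simp only [rightPoint, Fin.cons_zero]
    constructor <;> linarith [ha.1, ha.2]
  have huniv : configMeasure e (leftPoint ⁻¹' cell ([] : List (Alpha (e + 1) M)) ∩
      rightPoint t ⁻¹' cell ([] : List (Alpha (e + 1) M))) = 1 :=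
    (mem_ae_iff_prob_eq_one ((measurable_leftPoint (measurableSet_cell _)).inter
      (measurable_rightPoint t (measurableSet_cell _)))).1 (ae_mem_configBox.mono hmem)
  simp [distanceKernel, cellKernel, measureReal_def, huniv]

theorem card_left_distanceKernel_le (hM : 1 < M) (ht : 0 ≤ t) (v w' : List (Alpha (e + 1) M)) :
    ((((words _ w'.length).filter fun w => 0 < distanceKernel e M t w w').filter
      (v <+: ·)).card : ℝ) ≤ 4 * ((M : ℝ) ^ e) ^ (w'.length - v.length) := by
  refine card_filter_prefix_le hM v (Finset.filter_subset _ _) fun w₁ hw₁ w₂ hw₂ hsucc => ?_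
  obtain ⟨hlen₁, hpos₁⟩ := Finset.mem_filter.1 hw₁
  obtain ⟨hlen₂, hpos₂⟩ := Finset.mem_filter.1 hw₂
  rw [mem_words] at hlen₁ hlen₂
  obtain ⟨z₁, ⟨-, hz₁⟩, hl₁, hr₁⟩ := exists_mem_configBox_of_distanceKernel_pos hpos₁
  obtain ⟨z₂, ⟨-, hz₂⟩, hl₂, hr₂⟩ := exists_mem_configBox_of_distanceKernel_pos hpos₂
  have hlen := hlen₁.trans hlen₂.symm
  refine corner_lt_add_four hl₁ hl₂ hlen ?_
  have hleft (i : Fin e) := abs_sub_le_of_mem_cell hl₁ hl₂ hlen (hsucc i)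
  have hright (i : Fin (e + 1)) := abs_sub_le_of_mem_cell hr₁ hr₂ rfl (i := i) rfl
  rw [← hlen₁] at hright
  have hoffset := abs_offset_sub_offset_le ht hz₁ hz₂ hleft (fun i => hright i.succ) (by positivity)
  calc |z₁.1 - z₂.1|
    _ = |rightPoint t z₁ 0 - rightPoint t z₂ 0 - (offset t z₁.2 - offset t z₂.2)| := by
      simp only [rightPoint, Fin.cons_zero]; congr 1; ring
    _ ≤ _ := (abs_sub _ _).trans (by linarith [hright 0])

theorem card_right_distanceKernel_le (hM : 1 < M) (ht : 0 ≤ t) (v w : List (Alpha (e + 1) M)) :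
    ((((words _ w.length).filter fun w' => 0 < distanceKernel e M t w w').filter
      (v <+: ·)).card : ℝ) ≤ 4 * ((M : ℝ) ^ e) ^ (w.length - v.length) := by
  refine card_filter_prefix_le hM v (Finset.filter_subset _ _) fun w₁ hw₁ w₂ hw₂ hsucc => ?_
  obtain ⟨hlen₁, hpos₁⟩ := Finset.mem_filter.1 hw₁
  obtain ⟨hlen₂, hpos₂⟩ := Finset.mem_filter.1 hw₂
  rw [mem_words] at hlen₁ hlen₂
  obtain ⟨z₁, ⟨-, hz₁⟩, hl₁, hr₁⟩ := exists_mem_configBox_of_distanceKernel_pos hpos₁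
  obtain ⟨z₂, ⟨-, hz₂⟩, hl₂, hr₂⟩ := exists_mem_configBox_of_distanceKernel_pos hpos₂
  have hlen := hlen₁.trans hlen₂.symm
  refine corner_lt_add_four hr₁ hr₂ hlen ?_
  have hleft (i : Fin (e + 1)) := abs_sub_le_of_mem_cell hl₁ hl₂ rfl (i := i) rfl
  have hright (i : Fin e) := abs_sub_le_of_mem_cell hr₁ hr₂ hlen (hsucc i)
  rw [← hlen₁] at hleft
  have hoffset := abs_offset_sub_offset_le ht hz₁ hz₂ (fun i => hleft i.succ) hright (by positivity)
  calc |rightPoint t z₁ 0 - rightPoint t z₂ 0|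
    _ = |leftPoint z₁ 0 - leftPoint z₂ 0 + (offset t z₁.2 - offset t z₂.2)| := by
      simp only [leftPoint, rightPoint, Fin.cons_zero]; congr 1; ring
    _ ≤ _ := (abs_add_le _ _).trans (by linarith [hleft 0])

theorem side_le_wordBase_of_distanceKernel_pos (hM : 1 < M) (ht : 0 ≤ t)
    {w w' : List (Alpha (e + 1) M)} (hw' : w' ≠ []) (h : 0 < distanceKernel e M t w w') :
    side e ≤ wordBase (e + 1) M w' 0 := by
  obtain ⟨z, ⟨ha, hv⟩, -, hr⟩ := exists_mem_configBox_of_distanceKernel_pos h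
  have hoffset := half_le_offset ht hv
  have hmem : z.1 + offset t z.2 < wordBase (e + 1) M w' 0 + ((M : ℝ) ^ w'.length)⁻¹ :=
    (hr 0 trivial).2
  have hsize : ((M : ℝ) ^ w'.length)⁻¹ ≤ 2⁻¹ := by
    refine inv_anti₀ two_pos ?_
    exact_mod_cast Nat.succ_le_of_lt (Nat.one_lt_pow (List.length_eq_zero_iff.not.2 hw') hM)
  have hcorner : ((M : ℝ) ^ w'.length)⁻¹ ≤ wordBase (e + 1) M w' 0 := by
    have hpos : corner w' 0 ≠ 0 := fun h0 => by
      rw [wordBase_eq_corner_div, h0, Nat.cast_zero, zero_div] at hmem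
      linarith [ha.1]
    rw [wordBase_eq_corner_div, ← one_div]
    gcongr
    exact_mod_cast Nat.one_le_iff_ne_zero.2 hpos
  linarith [side_le e, ha.1]

theorem isLinkKernel_distanceKernel (hM : 1 < M) (ht : t ∈ Icc (0 : ℝ) 1) :
    IsLinkKernel (distanceKernel e M t) {w | wordBase (e + 1) M w 0 < side e}
      ((side e)⁻¹ ^ (2 * e + 1) + 4) ((M : ℝ) ^ (2 * e + 1))⁻¹ ((M : ℝ) ^ e) where
  nonneg _ _ := measureReal_nonneg
  sum_left := sum_cellKernel_concat_left measurable_leftPoint (measurable_rightPoint t)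
  sum_right := sum_cellKernel_concat_right measurable_leftPoint (measurable_rightPoint t)
  total := distanceKernel_nil_nil ht
  le_mul_pow hlen := (distanceKernel_le hlen).trans (by gcongr; simp)
  card_left_le v w' := (card_left_distanceKernel_le hM ht.1 v w').trans <| by
    gcongr; exact le_add_of_nonneg_left (pow_nonneg (inv_nonneg.2 (side_pos e).le) _)
  card_right_le v w := (card_right_distanceKernel_le hM ht.1 v w).trans <| by
    gcongr; exact le_add_of_nonneg_left (pow_nonneg (inv_nonneg.2 (side_pos e).le) _)
  left_mem _ := wordBase_lt_side_of_distanceKernel_pos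
  right_notMem hw' h := not_lt.2 (side_le_wordBase_of_distanceKernel_pos hM ht.1 hw' h)

end DistanceKernel

section Lipschitz

variable {e M : ℕ} {t s : ℝ}

theorem sideMeasure_shift_Ico_sdiff_le (a b x y : ℝ) :
    sideMeasure e {z | z + x ∈ Ico a b ∧ z + y ∉ Ico a b} ≤
      ENNReal.ofReal (2 * (side e)⁻¹ * |x - y|) := by
  have hr := inv_pos.2 (side_pos e)
  have hsub : {z | z + x ∈ Ico a b ∧ z + y ∉ Ico a b} ⊆
      Ico (a - x) (a - y) ∪ Ico (b - y) (b - x) := by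
    rintro z ⟨hx, hy⟩
    simp only [mem_Ico, mem_union, not_and_or, not_le, not_lt] at *
    exact hy.imp (fun h => by constructor <;> linarith) fun h => by constructor <;> linarith
  calc sideMeasure e {z | z + x ∈ Ico a b ∧ z + y ∉ Ico a b}
    _ ≤ sideMeasure e (Ico (a - x) (a - y)) + sideMeasure e (Ico (b - y) (b - x)) :=
      (measure_mono hsub).trans (measure_union_le _ _)
    _ ≤ ENNReal.ofReal ((side e)⁻¹ * |x - y|) + ENNReal.ofReal ((side e)⁻¹ * |x - y|) := by
      gcongr
      · exact (sideMeasure_Ico_le _ _).trans (by gcongr; linarith [le_abs_self (x - y)])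
      · exact (sideMeasure_Ico_le _ _).trans (by gcongr; linarith [neg_abs_le (x - y)])
    _ = ENNReal.ofReal (2 * (side e)⁻¹ * |x - y|) := by
      rw [← ENNReal.ofReal_add (by positivity) (by positivity)]; congr 1; ring

theorem configMeasure_preimage_cell_sdiff_le (ht : t ∈ Icc (0 : ℝ) 1) (hs : s ∈ Icc (0 : ℝ) 1)
    (w' : List (Alpha (e + 1) M)) :
    configMeasure e (rightPoint t ⁻¹' cell w' \ rightPoint s ⁻¹' cell w') ≤
      ENNReal.ofReal (2 * (side e)⁻¹ * |t - s|) := by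
  have hr := inv_pos.2 (side_pos e)
  rw [configMeasure, Measure.prod_apply_symm ((measurable_rightPoint t (measurableSet_cell _)).diff
    (measurable_rightPoint s (measurableSet_cell _)))]
  set b := wordBase (e + 1) M w' 0
  have hsection (v : (Fin e → ℝ) × (Fin e → ℝ)) : (fun a : ℝ => (a, v)) ⁻¹'
      (rightPoint t ⁻¹' cell w' \ rightPoint s ⁻¹' cell w') ⊆
        {a | a + offset t v ∈ Ico b (b + ((M : ℝ) ^ w'.length)⁻¹) ∧
          a + offset s v ∉ Ico b (b + ((M : ℝ) ^ w'.length)⁻¹)} := fun a ⟨hat, has⟩ =>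
    ⟨hat 0 trivial, fun h => has fun i _ => Fin.cases h (fun j => hat j.succ trivial) i⟩
  calc ∫⁻ v, sideMeasure e ((fun a : ℝ => (a, v)) ⁻¹'
        (rightPoint t ⁻¹' cell w' \ rightPoint s ⁻¹' cell w')) ∂transverseMeasure e
    _ ≤ ∫⁻ _v, ENNReal.ofReal (2 * (side e)⁻¹ * |t - s|) ∂transverseMeasure e := by
      refine lintegral_mono_ae (ae_mem_transverseBox.mono fun v hv => ?_)
      refine (measure_mono (hsection v)).trans ((sideMeasure_shift_Ico_sdiff_le _ _ _ _).trans ?_)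
      exact ENNReal.ofReal_le_ofReal <| mul_le_mul_of_nonneg_left
        (abs_offset_sub_offset_le_abs_sub ht hs hv) (by positivity)
    _ = ENNReal.ofReal (2 * (side e)⁻¹ * |t - s|) := by simp

theorem distanceKernel_sub_le (ht : t ∈ Icc (0 : ℝ) 1) (hs : s ∈ Icc (0 : ℝ) 1)
    (w w' : List (Alpha (e + 1) M)) :
    distanceKernel e M t w w' - distanceKernel e M s w w' ≤ 2 * (side e)⁻¹ * |t - s| := by
  have hr := inv_pos.2 (side_pos e)
  have hsub : leftPoint ⁻¹' cell w ∩ rightPoint t ⁻¹' cell w' ⊆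
      (leftPoint ⁻¹' cell w ∩ rightPoint s ⁻¹' cell w') ∪
        (rightPoint t ⁻¹' cell w' \ rightPoint s ⁻¹' cell w') := fun z hz =>
    (em (z ∈ rightPoint s ⁻¹' cell w')).imp (fun h => ⟨hz.1, h⟩) fun h => ⟨hz.2, h⟩
  rw [sub_le_iff_le_add']
  calc distanceKernel e M t w w'
    _ ≤ distanceKernel e M s w w' +
        (configMeasure e).real (rightPoint t ⁻¹' cell w' \ rightPoint s ⁻¹' cell w') :=
      (measureReal_mono hsub).trans (measureReal_union_le _ _)
    _ ≤ distanceKernel e M s w w' + 2 * (side e)⁻¹ * |t - s| := by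
      gcongr
      exact ENNReal.toReal_le_of_le_ofReal (by positivity)
        (configMeasure_preimage_cell_sdiff_le ht hs w')

theorem abs_distanceKernel_sub_le (ht : t ∈ Icc (0 : ℝ) 1) (hs : s ∈ Icc (0 : ℝ) 1)
    (w w' : List (Alpha (e + 1) M)) :
    |distanceKernel e M t w w' - distanceKernel e M s w w'| ≤ 2 * (side e)⁻¹ * |t - s| :=
  abs_sub_le_iff.2 ⟨distanceKernel_sub_le ht hs w w',
    abs_sub_comm t s ▸ distanceKernel_sub_le hs ht w w'⟩

end Lipschitz

/-! ### A zero–one law -/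

section Branching

variable {A : Type*}

/-- The labelling of the subtree rooted at `v`. -/
def branch (v : List A) (ω : List A → Bool) : List A → Bool := fun w => ω (v ++ w)

/-- The labelling has alive words of every length. -/
def Survives (ω : List A → Bool) : Prop := ∀ n, ∃ w, w.length = n ∧ Alive ω w

/-- The labellings none of whose alive words is the root of a subtree labelled by an element of
`G`. -/
def avoids (G : Set (List A → Bool)) : Set (List A → Bool) :=
  {ω | ∀ u, Alive ω u → branch u ω ∉ G}

variable {ω : List A → Bool} {G : Set (List A → Bool)}

theorem alive_nil : Alive ω [] ↔ ω [] = true := by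
  simp [Alive]

theorem alive_cons {c : A} {w : List A} :
    Alive ω (c :: w) ↔ ω [] = true ∧ Alive (branch [c] ω) w := by
  simp only [Alive, List.prefix_cons_iff]
  refine ⟨fun h => ⟨h _ (.inl rfl), fun u hu => h _ (.inr ⟨u, rfl, hu⟩)⟩, ?_⟩
  rintro ⟨h, h'⟩ _ (rfl | ⟨u, rfl, hu⟩)
  exacts [h, h' u hu]

theorem alive_append {v w : List A} (hv : Alive ω v) (hw : Alive (branch v ω) w) :
    Alive ω (v ++ w) := by
  induction v generalizing ω with
  | nil => exact hw
  | cons c v ih =>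
    rw [alive_cons] at hv
    exact alive_cons.2 ⟨hv.1, ih hv.2 hw⟩

theorem Survives.root (h : Survives ω) : ω [] = true := by
  obtain ⟨w, -, hw⟩ := h 0
  exact hw [] w.nil_prefix

theorem Alive.take {w : List A} (h : Alive ω w) (n : ℕ) : Alive ω (w.take n) :=
  fun u hu => h u (hu.trans (List.take_prefix n w))

theorem survives_of_forall_le_length (h : ∀ n, ∃ w, n ≤ w.length ∧ Alive ω w) : Survives ω :=
  fun n =>
    let ⟨w, hn, hw⟩ := h n
    ⟨w.take n, List.length_take_of_le hn, hw.take n⟩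

theorem Survives.of_branch {v : List A} (hv : Alive ω v) (h : Survives (branch v ω)) :
    Survives ω := survives_of_forall_le_length fun n =>
  let ⟨w, hlen, hw⟩ := h n
  ⟨v ++ w, by simp [hlen], alive_append hv hw⟩

theorem Survives.exists_branch [Finite A] (h : Survives ω) : ∃ c, Survives (branch [c] ω) := by
  cases nonempty_fintype A
  by_contra! hdead
  simp only [Survives, not_forall, not_exists, not_and] at hdead
  choose n hn using hdead
  obtain ⟨_ | ⟨c, w⟩, hlen, hw⟩ := h (Finset.univ.sup n + 1)
  · simp at hlen
  · have hc : n c ≤ w.length := by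
      simpa using (Finset.le_sup (Finset.mem_univ c)).trans_eq (Nat.succ_injective hlen).symm
    exact hn c (w.take (n c)) (List.length_take_of_le hc)
      ((alive_cons.1 hw).2.take _)

theorem branch_mem_avoids (h : ω ∈ avoids G) (hroot : ω [] = true) (c : A) :
    branch [c] ω ∈ avoids G := fun u hu => h (c :: u) (alive_cons.2 ⟨hroot, hu⟩)

@[fun_prop]
theorem measurable_branch (v : List A) : Measurable (branch v) :=
  measurable_pi_lambda _ fun _ => measurable_pi_apply _

theorem measurableSet_alive [Countable A] (w : List A) :
    MeasurableSet {ω : List A → Bool | Alive ω w} := by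
  simp only [Alive]
  measurability

theorem measurableSet_survives [Countable A] : MeasurableSet {ω : List A → Bool | Survives ω} := by
  simp only [Survives, ofPred_forall, ofPred_exists, ofPred_and]
  exact .iInter fun n => .iUnion fun w => (MeasurableSet.const _).inter (measurableSet_alive w)

theorem measurableSet_avoids [Countable A] (hG : MeasurableSet G) : MeasurableSet (avoids G) := by
  simp only [avoids, ofPred_forall, imp_iff_not_or, ofPred_or]
  exact .iInter fun u => (measurableSet_alive u).compl.union (measurable_branch u hG).compl

end Branching

section ZeroOne

variable {A : Type*} [Fintype A] {p : unitInterval}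

theorem bernoulliField_forall_branch_mem {B : Set (List A → Bool)} (hB : MeasurableSet B) :
    bernoulliField (List A) p {ω | ∀ c, branch [c] ω ∈ B} =
      bernoulliField (List A) p B ^ Fintype.card A := by
  have hcons : (fun x : A × List A => x.1 :: x.2).Injective := fun x y h => by
    simpa [Prod.ext_iff] using h
  have hmap : (bernoulliField (List A) p).map (fun ω c w => ω (c :: w)) =
      Measure.infinitePi fun _ : A => bernoulliField (List A) p := by
    simp only [bernoulliField]
    rw [← Measure.infinitePi_map_curry]
    change _ = (bernoulliField (A × List A) p).map _
    rw [← map_bernoulliField_of_injective hcons, Measure.map_map (by fun_prop) (by fun_prop)]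
    rfl
  have hpi := Measure.infinitePi_pi (fun _ : A => bernoulliField (List A) p)
    (s := Finset.univ) (t := fun _ => B) fun _ _ => hB
  rw [← hmap, Measure.map_apply (by fun_prop) (.pi (Finset.countable_toSet _) fun _ _ => hB),
    Finset.prod_const, Finset.card_univ] at hpi
  rw [← hpi]
  congr 1
  ext ω
  simp only [mem_ofPred_eq, Finset.coe_univ, mem_preimage, mem_pi, mem_univ, forall_const]
  rfl

theorem bernoulliField_real_root_imp_forall_branch_mem {B : Set (List A → Bool)}
    (hB : MeasurableSet B) :
    (bernoulliField (List A) p).real {ω | ω [] = true → ∀ c, branch [c] ω ∈ B} =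
      1 - p + p * (bernoulliField (List A) p).real B ^ Fintype.card A := by
  set G : Set (List A → Bool) := {ω | ∀ c, branch [c] ω ∈ B}
  have hG : MeasurableSet G := by
    simp only [G, ofPred_forall]
    exact .iInter fun c => measurable_branch [c] hB
  have hGT : DependsOn (· ∈ Gᶜ) ((({[]} : Finset (List A)) : Set (List A))ᶜ) := by
    intro ω ω' h
    have (c : A) : branch [c] ω = branch [c] ω' := funext fun w => h _ (by simp)
    simp [G, this]
  have hcompl : {ω | ω [] = true → ∀ c, branch [c] ω ∈ B} =
      (Gᶜ ∩ {ω | ∀ w ∈ ({[]} : Finset (List A)), ω w = true})ᶜ := by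
    ext ω
    simp only [G, Set.mem_ofPred_eq, mem_compl_iff, mem_inter_iff, Finset.mem_singleton, forall_eq]
    tauto
  have hmeas : MeasurableSet {ω : List A → Bool | ∀ w ∈ ({[]} : Finset (List A)), ω w = true} := by
    measurability
  rw [hcompl, measureReal_compl (hG.compl.inter hmeas), measureReal_def _ (_ ∩ _),
    bernoulliField_inter_forall_mem_eq_true hG.compl hGT, toReal_mul, ← measureReal_def,
    measureReal_compl hG, measureReal_def _ G, bernoulliField_forall_branch_mem hB]
  simp only [measureReal_def, measure_univ, toReal_one, toReal_pow, Finset.card_singleton, pow_one,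
    p.2.1, toReal_ofReal]
  ring

end ZeroOne

theorem strictConvexOn_one_sub_add_mul_pow {p : ℝ} (hp : 0 < p) {n : ℕ} (hn : 2 ≤ n) :
    StrictConvexOn ℝ (Ici 0) fun x : ℝ => 1 - p + p * x ^ n := by
  refine ⟨convex_Ici 0, fun x hx y hy hxy a b ha hb hab => ?_⟩
  have h := mul_lt_mul_of_pos_left ((strictConvexOn_pow hn).2 hx hy hxy ha hb hab) hp
  simp only [smul_eq_mul] at h ⊢
  linear_combination h + (p - 1) * hab

theorem le_of_strictConvexOn_of_le_apply {f : ℝ → ℝ} {s : Set ℝ} (hf : StrictConvexOn ℝ s f)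
    {x y z : ℝ} (hx : x ∈ s) (hz : z ∈ s) (hfx : f x ≤ x) (hfz : f z ≤ z) (hyz : y < z)
    (hfy : y ≤ f y) : y ≤ x := by
  by_contra! hxy
  have h := hf.slope_strict_mono_adjacent hx hz hxy hyz
  rw [div_lt_div_iff₀ (by linarith) (by linarith)] at h
  nlinarith

theorem ae_survives_imp_exists_branch_mem {A : Type*} [Finite A] [Nontrivial A] {p : unitInterval}
    (hp : (0 : ℝ) < p) {G : Set (List A → Bool)} (hG : MeasurableSet G)
    (hpos : bernoulliField (List A) p G ≠ 0) (hsurv : ∀ ω ∈ G, Survives ω) :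
    ∀ᵐ ω ∂bernoulliField (List A) p, Survives ω → ∃ u, Alive ω u ∧ branch u ω ∈ G := by
  cases nonempty_fintype A
  set μ := bernoulliField (List A) p
  set X : Set (List A → Bool) := {ω | Survives ω}ᶜ
  have hX : MeasurableSet X := measurableSet_survives.compl
  have hXG : X ⊆ avoids G := fun ω hω u hu huG => hω (Survives.of_branch hu (hsurv _ huG))
  have hXf : 1 - p + p * μ.real X ^ Fintype.card A ≤ μ.real X := by
    rw [← bernoulliField_real_root_imp_forall_branch_mem hX]
    exact measureReal_mono fun ω h hω =>
      let ⟨c, hc⟩ := hω.exists_branch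
      h hω.root c hc
  have hGf : μ.real (avoids G) ≤ 1 - p + p * μ.real (avoids G) ^ Fintype.card A := by
    rw [← bernoulliField_real_root_imp_forall_branch_mem (measurableSet_avoids hG)]
    exact measureReal_mono fun ω h => branch_mem_avoids h
  have hlt : μ.real (avoids G) < 1 := by
    have hdisj : G ⊆ (avoids G)ᶜ := fun ω hω h => h [] (alive_nil.2 (hsurv ω hω).root) hω
    have := measureReal_mono (μ := μ) hdisj
    rw [probReal_compl_eq_one_sub (measurableSet_avoids hG)] at this
    have : 0 < μ.real G :=
      measureReal_nonneg.lt_of_ne' ((measureReal_ne_zero_iff (by finiteness)).2 hpos)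
    linarith
  have hle := le_of_strictConvexOn_of_le_apply
    (strictConvexOn_one_sub_add_mul_pow hp (Fintype.one_lt_card (α := A))) measureReal_nonneg
    (mem_Ici.2 zero_le_one) hXf (by simp) hlt hGf
  have hnull : μ (avoids G \ X) = 0 := by
    rw [← measureReal_eq_zero_iff, measureReal_sdiff hXG hX]
    linarith [measureReal_mono (μ := μ) hXG]
  filter_upwards [measure_eq_zero_iff_ae_notMem.1 hnull] with ω hω hs
  by_contra! h
  exact hω ⟨h, fun hX => hX hs⟩

/-! ### From words to the limit set -/

section Geometry

variable {d M : ℕ}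

theorem mem_wordCube {w : List (Alpha d M)} {x : EuclideanSpace ℝ (Fin d)} :
    x ∈ wordCube d M w ↔
      ∀ i, x i ∈ Icc (wordBase d M w i) (wordBase d M w i + ((M : ℝ) ^ w.length)⁻¹) := by
  simp [wordCube]

theorem wordCube_nonempty (w : List (Alpha d M)) : (wordCube d M w).Nonempty :=
  ⟨WithLp.toLp 2 (wordBase d M w), mem_wordCube.2 fun _ => left_mem_Icc.2 (by simp)⟩

theorem isCompact_wordCube (w : List (Alpha d M)) : IsCompact (wordCube d M w) := by
  have hpre : wordCube d M w = EuclideanSpace.equiv (Fin d) ℝ ⁻¹' univ.pi fun i =>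
      Icc (wordBase d M w i) (wordBase d M w i + ((M : ℝ) ^ w.length)⁻¹) := by
    ext x
    exact mem_wordCube.trans mem_univ_pi.symm
  rw [hpre]
  exact (EuclideanSpace.equiv (Fin d) ℝ).toHomeomorph.isCompact_preimage.2
    (isCompact_univ_pi fun _ => isCompact_Icc)

theorem isCompact_approx (ω : PercSpace d M) (n : ℕ) : IsCompact (approx d M ω n) :=
  ((List.finite_length_eq _ n).subset fun _ hw => hw.1).isCompact_biUnion fun w _ =>
    isCompact_wordCube w

theorem mem_approx {ω : PercSpace d M} {n : ℕ} {x : EuclideanSpace ℝ (Fin d)} :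
    x ∈ approx d M ω n ↔ ∃ w, w.length = n ∧ Retained d M ω w ∧ x ∈ wordCube d M w := by
  simp [approx, and_assoc]

/-- The similarity of ratio `M^{-|v|}` that maps the unit cube onto the cube indexed by `v`. -/
def zoom (v : List (Alpha d M)) (x : EuclideanSpace ℝ (Fin d)) : EuclideanSpace ℝ (Fin d) :=
  WithLp.toLp 2 (wordBase d M v) + ((M : ℝ) ^ v.length)⁻¹ • x

theorem dist_zoom (v : List (Alpha d M)) (x y : EuclideanSpace ℝ (Fin d)) :
    dist (zoom v x) (zoom v y) = ((M : ℝ) ^ v.length)⁻¹ * dist x y := by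
  simp [zoom, dist_smul₀]

variable [NeZero M]

theorem wordBase_append (v w : List (Alpha d M)) (i : Fin d) :
    wordBase d M (v ++ w) i = wordBase d M v i + ((M : ℝ) ^ v.length)⁻¹ * wordBase d M w i := by
  induction v with
  | nil => simp [wordBase_nil]
  | cons c v ih =>
    have hM : (M : ℝ) ≠ 0 := NeZero.ne _
    rw [List.cons_append, wordBase_cons, wordBase_cons, ih, List.length_cons]
    field_simp
    ring

theorem zoom_mem_wordCube_append (v : List (Alpha d M)) {w : List (Alpha d M)}
    {x : EuclideanSpace ℝ (Fin d)} (hx : x ∈ wordCube d M w) :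
    zoom v x ∈ wordCube d M (v ++ w) := mem_wordCube.2 fun i => by
  obtain ⟨hl, hu⟩ := mem_wordCube.1 hx i
  have hcoord : zoom v x i = wordBase d M v i + ((M : ℝ) ^ v.length)⁻¹ * x i := by simp [zoom]
  rw [hcoord, wordBase_append, List.length_append, pow_add, mul_inv, add_assoc, ← mul_add]
  exact ⟨by gcongr, by gcongr⟩

theorem wordCube_concat_subset (w : List (Alpha d M)) (c : Alpha d M) :
    wordCube d M (w ++ [c]) ⊆ wordCube d M w := fun x hx => mem_wordCube.2 fun i => by
  have hM : (0 : ℝ) < M := Nat.cast_pos.2 (NeZero.pos M)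
  have hc : (c i : ℝ) + 1 ≤ M := by exact_mod_cast (c i).2
  have hbase : wordBase d M (w ++ [c]) i =
      wordBase d M w i + ((M : ℝ) ^ w.length)⁻¹ * (c i / M) := by
    rw [wordBase_append, wordBase_cons, wordBase_nil, add_zero]
  obtain ⟨hl, hu⟩ := mem_wordCube.1 hx i
  refine ⟨le_trans (by rw [hbase]; exact le_add_of_nonneg_right (by positivity)) hl,
    hu.trans ?_⟩
  rw [hbase, List.length_append, pow_add, mul_inv, add_assoc, ← mul_add]
  simp only [List.length_singleton, pow_one, ← one_div (M : ℝ), ← add_div]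
  gcongr
  exact mul_le_of_le_one_right (by positivity) ((div_le_one hM).2 hc)

theorem antitone_approx (ω : PercSpace d M) : Antitone (approx d M ω) := by
  refine antitone_nat_of_succ_le fun n x hx => ?_
  obtain ⟨w, hlen, hw, hx⟩ := mem_approx.1 hx
  obtain rfl | ⟨w, c, rfl⟩ := w.eq_nil_or_concat'
  · simp at hlen
  · exact mem_approx.2 ⟨w, by simpa using hlen,
      fun u hu hpre => hw u hu (hpre.trans (List.prefix_append _ _)), wordCube_concat_subset w c hx⟩

theorem exists_mem_percLimit_dist_eq {ω : PercSpace d M} {r : ℝ}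
    (h : ∃ᶠ n in Filter.atTop, ∃ x ∈ approx d M ω n, ∃ y ∈ approx d M ω n, dist x y = r) :
    ∃ x ∈ percLimit d M ω, ∃ y ∈ percLimit d M ω, dist x y = r := by
  let K (n : ℕ) := approx d M ω n ×ˢ approx d M ω n ∩ {z | dist z.1 z.2 = r}
  have hK (n : ℕ) : IsCompact (K n) :=
    ((isCompact_approx ω n).prod (isCompact_approx ω n)).inter_right
      (isClosed_eq continuous_dist continuous_const)
  have hanti : Antitone K := fun m n hmn =>
    inter_subset_inter_left _ (prod_mono (antitone_approx ω hmn) (antitone_approx ω hmn))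
  have hne (n : ℕ) : (K n).Nonempty := by
    obtain ⟨m, hnm, x, hx, y, hy, hxy⟩ := Filter.frequently_atTop.1 h n
    exact ⟨(x, y), hanti hnm ⟨⟨hx, hy⟩, hxy⟩⟩
  obtain ⟨z, hz⟩ := IsCompact.nonempty_iInter_of_sequence_nonempty_isCompact_isClosed K
    (fun n => hanti n.le_succ) hne (hK 0) fun n => (hK n).isClosed
  rw [mem_iInter] at hz
  exact ⟨z.1, mem_iInter₂.2 fun n _ => (hz n).1.1, z.2, mem_iInter₂.2 fun n _ => (hz n).1.2,
    (hz 0).2⟩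

end Geometry

section Root

variable {d M : ℕ}

/-- Extends a labelling of the nonempty words by the label `true` of the root. -/
def withRoot (ω : PercSpace d M) : List (Alpha d M) → Bool :=
  fun w => if h : w = [] then true else ω ⟨w, h⟩

variable {ω : PercSpace d M}

theorem alive_withRoot {w : List (Alpha d M)} : Alive (withRoot ω) w ↔ Retained d M ω w := by
  refine forall_congr' fun u => ?_
  by_cases hu : u = [] <;> simp [withRoot, hu]

theorem survives_withRoot (h : percLimit d M ω ≠ ∅) : Survives (withRoot ω) := by
  obtain ⟨x, hx⟩ := nonempty_iff_ne_empty.2 h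
  rintro (_ | n)
  · exact ⟨[], rfl, alive_nil.2 rfl⟩
  · obtain ⟨w, hlen, hw, -⟩ := mem_approx.1 (mem_iInter₂.1 hx (n + 1) n.succ_pos)
    exact ⟨w, hlen, alive_withRoot.2 hw⟩

theorem percLimit_ne_empty_iff [NeZero M] : percLimit d M ω ≠ ∅ ↔ Survives (withRoot ω) := by
  refine ⟨survives_withRoot, fun h => ?_⟩
  obtain ⟨x, hx, -⟩ := exists_mem_percLimit_dist_eq (r := 0) <| .of_forall fun n => by
    obtain ⟨w, hlen, hw⟩ := h n
    obtain ⟨x, hx⟩ := wordCube_nonempty w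
    have hmem := mem_approx.2 ⟨w, hlen, alive_withRoot.1 hw, hx⟩
    exact ⟨x, hmem, x, hmem, dist_self x⟩
  exact nonempty_iff_ne_empty.1 ⟨x, hx⟩

theorem measurableSet_percLimit_ne_empty [NeZero M] :
    MeasurableSet {ω : PercSpace d M | percLimit d M ω ≠ ∅} := by
  have hroot : Measurable (withRoot : PercSpace d M → _) :=
    measurable_pi_lambda _ fun w => by unfold withRoot; split_ifs <;> fun_prop
  simp only [percLimit_ne_empty_iff]
  exact hroot measurableSet_survives

theorem map_branch_withRoot (p : unitInterval) (c : Alpha d M) :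
    (bernoulliField (Word d M) p).map (fun ω => branch [c] (withRoot ω)) =
      bernoulliField (List (Alpha d M)) p :=
  map_bernoulliField_of_injective (f := fun w => (⟨c :: w, List.cons_ne_nil _ _⟩ : Word d M))
    fun w w' h => by simpa using h

theorem ae_exists_retained_branch_mem [Nontrivial (Alpha d M)] {p : unitInterval}
    (hp : (0 : ℝ) < p) {G : Set (List (Alpha d M) → Bool)} (hG : MeasurableSet G)
    (hpos : bernoulliField (List (Alpha d M)) p G ≠ 0) (hsurv : ∀ ω ∈ G, Survives ω) :
    ∀ᵐ ω ∂bernoulliField (Word d M) p, percLimit d M ω ≠ ∅ →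
      ∃ v, Retained d M ω v ∧ branch v (withRoot ω) ∈ G := by
  have hbranch (c : Alpha d M) : ∀ᵐ ω ∂bernoulliField (Word d M) p,
      Survives (branch [c] (withRoot ω)) →
        ∃ u, Alive (branch [c] (withRoot ω)) u ∧ branch u (branch [c] (withRoot ω)) ∈ G := by
    have h := ae_survives_imp_exists_branch_mem hp hG hpos hsurv
    rw [← map_branch_withRoot p c] at h
    refine ae_of_ae_map (AEMeasurable.of_map_ne_zero ?_) h
    rw [map_branch_withRoot]
    exact IsProbabilityMeasure.ne_zero _
  filter_upwards [ae_all_iff.2 hbranch] with ω hω hne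
  obtain ⟨c, hc⟩ := (survives_withRoot hne).exists_branch
  obtain ⟨u, hu, huG⟩ := hω c hc
  exact ⟨c :: u, alive_withRoot.1 (alive_cons.2 ⟨rfl, hu⟩), huG⟩

end Root

theorem exists_mem_percLimit_dist_eq_of_linked {e M : ℕ} [NeZero M] {ω : PercSpace (e + 1) M}
    {v : List (Alpha (e + 1) M)} (hv : Retained (e + 1) M ω v) {t : ℝ} (ht : 0 ≤ t) {k : ℕ}
    (h : ∀ n ≥ k, ∃ w w', w.length = n ∧ w'.length = n ∧ 0 < distanceKernel e M t w w' ∧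
      Alive (branch v (withRoot ω)) w ∧ Alive (branch v (withRoot ω)) w') :
    ∃ x ∈ percLimit (e + 1) M ω, ∃ y ∈ percLimit (e + 1) M ω,
      dist x y = ((M : ℝ) ^ v.length)⁻¹ * targetDist t := by
  refine exists_mem_percLimit_dist_eq (Filter.frequently_atTop.2 fun n => ?_)
  obtain ⟨w, w', hw, hw', hpos, halive, halive'⟩ := h (max n k) (le_max_right _ _)
  obtain ⟨z, hz, hleft, hright⟩ := exists_mem_configBox_of_distanceKernel_pos hpos
  have hmem {u : List (Alpha (e + 1) M)} {y : Fin (e + 1) → ℝ} (hu : u.length = max n k)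
      (halive : Alive (branch v (withRoot ω)) u) (hy : y ∈ cell u) :
      zoom v (WithLp.toLp 2 y) ∈ approx (e + 1) M ω (v.length + max n k) :=
    mem_approx.2 ⟨v ++ u, by simp [hu],
      alive_withRoot.1 (alive_append (alive_withRoot.2 hv) halive),
      zoom_mem_wordCube_append v (toLp_mem_wordCube hy)⟩
  exact ⟨v.length + max n k, by lia, _, hmem hw' halive' hright, _, hmem hw halive hleft, by
    rw [dist_zoom, dist_rightPoint_leftPoint ht hz.2]⟩

theorem Ioo_subset_of_forall_mul_targetDist_mem {c : ℝ} (hc : 0 < c) {D : Set ℝ}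
    (h : ∀ t ∈ Icc (0 : ℝ) 1, c * targetDist t ∈ D) : Ioo (c * (5 / 8)) (c * (3 / 4)) ⊆ D := by
  intro r hr
  have ht : 8 * (r / c) - 5 ∈ Icc (0 : ℝ) 1 := by
    have hl := (lt_div_iff₀' hc).2 hr.1
    have hu := (div_lt_iff₀' hc).2 hr.2
    constructor <;> linarith
  convert h _ ht using 1
  unfold targetDist
  field_simp
  ring

theorem inv_pow_lt_sq_of_rpow_lt {M p : ℝ} (hM : 0 < M) {e : ℕ}
    (hp : M ^ ((1 : ℝ) / 2 - (e + 1 : ℕ)) < p) : (M ^ (2 * e + 1))⁻¹ < p ^ 2 := by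
  have hsq : (M ^ ((1 : ℝ) / 2 - (e + 1 : ℕ))) ^ 2 = (M ^ (2 * e + 1))⁻¹ := by
    rw [← Real.rpow_natCast, ← rpow_mul hM.le, ← Real.rpow_natCast, ← rpow_neg hM.le]
    congr 1
    push_cast
    ring
  rw [← hsq]
  gcongr

theorem inv_pow_mul_pow_lt_of_rpow_lt {M p : ℝ} (hM : 1 < M) {e : ℕ}
    (hp : M ^ ((1 : ℝ) / 2 - (e + 1 : ℕ)) < p) : (M ^ (2 * e + 1))⁻¹ * M ^ e < p := by
  have hM0 := zero_lt_one.trans hM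
  calc (M ^ (2 * e + 1))⁻¹ * M ^ e
    _ = M ^ (-((e + 1 : ℕ) : ℝ)) := by
      rw [Real.rpow_neg hM0.le, Real.rpow_natCast]
      field_simp
      ring
    _ ≤ M ^ ((1 : ℝ) / 2 - (e + 1 : ℕ)) := rpow_le_rpow_of_exponent_le hM.le (by linarith)
    _ < p := hp

theorem exists_measurableSet_forall_distanceKernel_pos {e M : ℕ} (hM : 1 < M) {p : unitInterval}
    (hp : (M : ℝ) ^ ((1 : ℝ) / 2 - (e + 1 : ℕ)) < p) :
    ∃ G, MeasurableSet G ∧ bernoulliField (List (Alpha (e + 1) M)) p G ≠ 0 ∧ ∃ k, ∀ ω ∈ G, ∀ n ≥ k,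
      ∀ t ∈ Icc (0 : ℝ) 1, ∃ w w', w.length = n ∧ w'.length = n ∧ 0 < distanceKernel e M t w w' ∧
        Alive ω w ∧ Alive ω w' := by
  have : NeZero M := ⟨by lia⟩
  have hM' : (1 : ℝ) < M := by exact_mod_cast hM
  exact exists_measurableSet_forall_linked ((by positivity : (0 : ℝ) < _).trans hp)
    (by positivity) (by positivity) (inv_pow_lt_sq_of_rpow_lt (by positivity) hp)
    (inv_pow_mul_pow_lt_of_rpow_lt hM' hp) (fun t ht => isLinkKernel_distanceKernel hM ht)
    fun s hs t ht => abs_distanceKernel_sub_le ht hs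

theorem ae_bernoulliField_exists_Ioo_subset {e M : ℕ} (hM : 1 < M) {p : unitInterval}
    (hp : (M : ℝ) ^ ((1 : ℝ) / 2 - (e + 1 : ℕ)) < p) :
    ∀ᵐ ω ∂bernoulliField (Word (e + 1) M) p, percLimit (e + 1) M ω ≠ ∅ →
      ∃ a b : ℝ, a < b ∧ Ioo a b ⊆
        {r | ∃ x ∈ percLimit (e + 1) M ω, ∃ y ∈ percLimit (e + 1) M ω, r = dist x y} := by
  have : NeZero M := ⟨by lia⟩
  have : Nontrivial (Fin M) := Fin.nontrivial_iff_two_le.2 hM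
  obtain ⟨G, hG, hpos, k, hk⟩ := exists_measurableSet_forall_distanceKernel_pos hM hp
  have hsurv (ω) (hω : ω ∈ G) : Survives ω := survives_of_forall_le_length fun n =>
    let ⟨w, _, hw, _, _, halive, _⟩ := hk ω hω (max n k) (le_max_right _ _) 0 (by simp)
    ⟨w, (le_max_left _ _).trans_eq hw.symm, halive⟩
  have hp0 : (0 : ℝ) < p := (by positivity : (0 : ℝ) ≤ _).trans_lt hp
  filter_upwards [ae_exists_retained_branch_mem hp0 hG hpos hsurv] with ω hω hne
  obtain ⟨v, hv, hvG⟩ := hω hne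
  have hc : 0 < ((M : ℝ) ^ v.length)⁻¹ := by
    have : (M : ℝ) ≠ 0 := NeZero.ne _
    positivity
  refine ⟨_, _, mul_lt_mul_of_pos_left (by norm_num) hc,
    Ioo_subset_of_forall_mul_targetDist_mem hc fun t ht => ?_⟩
  obtain ⟨x, hx, y, hy, hxy⟩ := exists_mem_percLimit_dist_eq_of_linked hv ht.1
    fun n hn => hk _ hvG n hn t ht
  exact ⟨x, hx, y, hy, hxy.symm⟩

end FractalPercolation

/-- if `p > M^{-d+1/2}`, then conditioned on `E ≠ ∅`, almost
surely the distance set `D(E)` contains a nonempty open interval. -/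
theorem distance_set_one_percolation
    (d M : ℕ) (hd : 1 ≤ d) (hM : 2 ≤ M)
    (p : ℝ) (hp1 : p ≤ 1) (hp : (M : ℝ) ^ ((1 : ℝ) / 2 - (d : ℝ)) < p)
    (P : Measure (PercSpace d M)) (hP : IsBernoulliPerc d M p P) :
    ∀ᵐ ω ∂(ProbabilityTheory.cond P {ω | percLimit d M ω ≠ ∅}),
      ∃ a b : ℝ, a < b ∧ Set.Ioo a b ⊆
        {r | ∃ x ∈ percLimit d M ω, ∃ y ∈ percLimit d M ω, r = dist x y} := by
  obtain ⟨e, rfl⟩ := Nat.exists_eq_add_of_le' hd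
  lift p to unitInterval using ⟨(by positivity : (0 : ℝ) ≤ _).trans hp.le, hp1⟩
  have : NeZero M := ⟨by lia⟩
  have h := FractalPercolation.ae_bernoulliField_exists_Ioo_subset hM hp
  rw [← FractalPercolation.eq_bernoulliField_of_isBernoulliPerc hP] at h
  filter_upwards [cond_absolutelyContinuous.ae_le h,
    ae_cond_mem FractalPercolation.measurableSet_percLimit_ne_empty] with ω hω hne using hω hne
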